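/- arXiv:2605.20527 — 3 statements merged into one kernel-verified Lean document; each statement's English description precedes it below -/
import Mathlib

section
/- Let M ≥ 2 be an integer and set η_M = 2 e^{1/4} Σ_{m ≥ M} e^{−m²}. Let D ≥ 1, let a₁, …, a_D ∈ ℂ, set U(z) = Σ_{n=1}^{D} a_n z^n, for ℓ ≥ 1 set U_ℓ(z) = Σ_{n ∈ I_ℓ, n ≤ D} a_n z^n where I_ℓ = {n ∈ ℕ : ℓ² ≤ n < (ℓ+1)²}, and for j ≥ 0 set V_j = Σ_{1 ≤ ℓ, |ℓ−j| ≤ M} U_ℓ and R_j = U − V_j. Then Σ_{j ≥ 0} (1/π) ∫_{{j ≤ |z| < j+1}} |R_j(z)|² e^{−|z|²} dm(z) ≤ η_M ‖U‖_F². -/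
open MeasureTheory

/-- The Fock norm of a function `F : ℂ → E`:
`‖F‖_F² = (1/π) ∫_ℂ ‖F(z)‖² e^{-|z|²} dm(z)`. -/
noncomputable def fockNorm {E : Type*} [NormedAddCommGroup E] (F : ℂ → E) : ℝ :=
  Real.sqrt ((1 / Real.pi) * ∫ z : ℂ, ‖F z‖ ^ 2 * Real.exp (-‖z‖ ^ 2))

/-- The block polynomial `U_ℓ(z) = Σ_{n ∈ I_ℓ, n ≤ D} a_n zⁿ`, where
`I_ℓ = {n : ℓ² ≤ n < (ℓ+1)²}`. -/
noncomputable def Ublock (D ℓ : ℕ) (a : ℕ → ℂ) (z : ℂ) : ℂ :=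
  ∑ n ∈ (Finset.Icc 1 D).filter (fun n => ℓ ^ 2 ≤ n ∧ n < (ℓ + 1) ^ 2), a n * z ^ n

/-- The local part `V_j = Σ_{ℓ ≥ 1, |ℓ−j| ≤ M} U_ℓ`. -/
noncomputable def Vpart (M D j : ℕ) (a : ℕ → ℂ) (z : ℂ) : ℂ :=
  ∑ ℓ ∈ (Finset.range (j + M + 1)).filter
      (fun ℓ : ℕ => 1 ≤ ℓ ∧ ((ℓ : ℤ) - (j : ℤ)).natAbs ≤ M), Ublock D ℓ a z

/-- The tail `η_M = 2 e^{1/4} Σ_{m ≥ M} e^{−m²}`. -/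
noncomputable def ηtail (M : ℕ) : ℝ :=
  2 * Real.exp (1 / 4) * ∑' m : ℕ, if M ≤ m then Real.exp (-(m : ℝ) ^ 2) else 0

/-!
Let `γ` be the probability measure `π⁻¹ e^{-|z|²} dm(z)`. Rotations preserve `γ` and each annulus
`A_j = {j ≤ |z| < j + 1}`, so monomials of distinct degrees are orthogonal in `L²(γ)` as well as in
`L²(γ|A_j)`, and both sides of the inequality become sums of `|a_n|²` against moments of `γ`. It
remains to bound, for each `n`, the sum of `∫_{A_j} |z|^{2n} dγ` over all `j` with `|⌊√n⌋ - j| > M`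
by `η_M ∫ |z|^{2n} dγ = η_M n!`.

In polar coordinates the density of `|z|^{2n} dγ` is `2 r^{2n+1} e^{-r²}`, which peaks at
`r = √(n + 1/2)` and, because `log` lies below its tangent there, is dominated by a Gaussian of
variance `1/2` centred at the peak. The peak value is at most `e^{1/4} n!` by Stirling's bound, and
`A_j` is at distance at least `|⌊√n⌋ - j| - 1 ≥ M` from the peak. Each value of `|⌊√n⌋ - j| - 1` is
attained at most twice, which produces the factor `2` in `η_M`.
-/

section

open Real
open scoped ComplexConjugate Nat

section RotationInvariant

variable {μ : Measure ℂ}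

theorem integral_pow_mul_conj_pow_eq_zero
    (hμ : ∀ c : Circle, MeasurePreserving (rotation c) μ μ) {m n : ℕ} (hmn : m ≠ n) :
    ∫ z, z ^ m * conj z ^ n ∂μ = 0 := by
  have hmn' : (m : ℂ) - n ≠ 0 := sub_ne_zero.mpr (by exact_mod_cast hmn)
  -- Rotating by `π / (m - n)` changes the sign of the integrand.
  set c := Circle.exp (π / (m - n)) with hc
  have hsign : (c : ℂ) ^ m * conj (c : ℂ) ^ n = -1 := by
    rw [hc, Circle.coe_exp, ← Complex.exp_conj, ← Complex.exp_nat_mul, ← Complex.exp_nat_mul,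
      ← Complex.exp_add, ← Complex.exp_pi_mul_I]
    congr 1
    simp only [map_mul, Complex.conj_ofReal, Complex.conj_I]
    push_cast
    field_simp
    ring
  have hrot (z : ℂ) : rotation c z ^ m * conj (rotation c z) ^ n = -(z ^ m * conj z ^ n) := by
    rw [rotation_apply, map_mul, mul_pow, mul_pow]
    linear_combination z ^ m * conj z ^ n * hsign
  have hinv := (hμ c).integral_comp (rotation c).toHomeomorph.measurableEmbedding
    fun z => z ^ m * conj z ^ n
  simp only [hrot, integral_neg] at hinv
  exact self_eq_neg.mp hinv.symm

theorem integrable_pow_mul_conj_pow (hint : ∀ k : ℕ, Integrable (fun z : ℂ => ‖z‖ ^ k) μ)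
    (m n : ℕ) : Integrable (fun z : ℂ => z ^ m * conj z ^ n) μ := by
  refine (hint (m + n)).mono' (Continuous.aestronglyMeasurable (by fun_prop)) (ae_of_all _ ?_)
  intro z
  simp [pow_add]

variable {E : Type*} [NormedAddCommGroup E] [InnerProductSpace ℂ E]

theorem ofReal_norm_sum_pow_smul_sq (S : Finset ℕ) (a : ℕ → E) (z : ℂ) :
    ((‖∑ n ∈ S, z ^ n • a n‖ ^ 2 : ℝ) : ℂ) =
      ∑ n ∈ S, ∑ m ∈ S, z ^ m * conj z ^ n * inner ℂ (a n) (a m) := by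
  rw [Complex.ofReal_pow, ← Complex.coe_algebraMap, ← inner_self_eq_norm_sq_to_K, sum_inner]
  refine Finset.sum_congr rfl fun n _ => ?_
  rw [inner_sum]
  refine Finset.sum_congr rfl fun m _ => ?_
  rw [inner_smul_left, inner_smul_right, map_pow]
  ring

theorem integral_norm_sum_pow_smul_sq
    (hμ : ∀ c : Circle, MeasurePreserving (rotation c) μ μ)
    (hint : ∀ k : ℕ, Integrable (fun z : ℂ => ‖z‖ ^ k) μ) (S : Finset ℕ) (a : ℕ → E) :
    ∫ z, ‖∑ n ∈ S, z ^ n • a n‖ ^ 2 ∂μ = ∑ n ∈ S, ‖a n‖ ^ 2 * ∫ z, ‖z‖ ^ (2 * n) ∂μ := by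
  have hterm (n m : ℕ) :
      Integrable (fun z : ℂ => z ^ m * conj z ^ n * inner ℂ (a n) (a m)) μ :=
    (integrable_pow_mul_conj_pow hint m n).mul_const _
  have hdiag (z : ℂ) (n : ℕ) : z ^ n * conj z ^ n = ((‖z‖ ^ (2 * n) : ℝ) : ℂ) := by
    rw [← mul_pow, Complex.mul_conj', ← pow_mul, Complex.ofReal_pow]
  apply Complex.ofReal_injective
  rw [← integral_complex_ofReal, Complex.ofReal_sum]
  simp only [ofReal_norm_sum_pow_smul_sq]
  rw [integral_finsetSum _ fun n _ => integrable_finsetSum _ fun m _ => hterm n m]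
  refine Finset.sum_congr rfl fun n hn => ?_
  rw [integral_finsetSum _ fun m _ => hterm n m, Finset.sum_eq_single_of_mem n hn]
  · simp only [hdiag]
    rw [integral_mul_const, integral_complex_ofReal, inner_self_eq_norm_sq_to_K, mul_comm,
      Complex.ofReal_mul, Complex.ofReal_pow]
    rfl
  · intro m _ hmn
    rw [integral_mul_const, integral_pow_mul_conj_pow_eq_zero hμ hmn, zero_mul]

end RotationInvariant

section FockMeasure

/-- The Gaussian probability measure `π⁻¹ e^{-|z|²} dm(z)` on `ℂ`; the Fock norm is its `L²` norm
(`fockNorm_sq`). -/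
noncomputable def fockMeasure : Measure ℂ :=
  volume.withDensity fun z => ENNReal.ofReal (1 / π * exp (-‖z‖ ^ 2))

theorem setIntegral_fockMeasure (f : ℂ → ℝ) {s : Set ℂ} (hs : MeasurableSet s) :
    ∫ z in s, f z ∂fockMeasure = 1 / π * ∫ z in s, f z * exp (-‖z‖ ^ 2) := by
  rw [fockMeasure, setIntegral_withDensity_eq_setIntegral_toReal_smul (by fun_prop)
    (ae_of_all _ fun _ => ENNReal.ofReal_lt_top) _ hs, ← integral_const_mul]
  refine integral_congr_ae (ae_of_all _ fun z => ?_)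
  dsimp only
  rw [ENNReal.toReal_ofReal (by positivity), smul_eq_mul]
  ring

theorem integral_fockMeasure (f : ℂ → ℝ) :
    ∫ z, f z ∂fockMeasure = 1 / π * ∫ z, f z * exp (-‖z‖ ^ 2) := by
  simpa only [Measure.restrict_univ] using setIntegral_fockMeasure f MeasurableSet.univ

theorem fockNorm_sq {E : Type*} [NormedAddCommGroup E] (F : ℂ → E) :
    fockNorm F ^ 2 = ∫ z, ‖F z‖ ^ 2 ∂fockMeasure := by
  rw [integral_fockMeasure, fockNorm, sq_sqrt]
  exact mul_nonneg (by positivity) (integral_nonneg fun z => by positivity)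

theorem measurePreserving_withDensity_of_comp_eq {α : Type*} [MeasurableSpace α] {μ : Measure α}
    {f : α → α} (hf : MeasurePreserving f μ μ) {w : α → ENNReal} (hw : Measurable w)
    (hwf : ∀ x, w (f x) = w x) :
    MeasurePreserving f (μ.withDensity w) (μ.withDensity w) := by
  refine ⟨hf.measurable, Measure.ext fun s hs => ?_⟩
  rw [Measure.map_apply hf.measurable hs, withDensity_apply _ hs,
    withDensity_apply _ (hf.measurable hs), ← hf.setLIntegral_comp_preimage hs hw]
  simp only [hwf]

theorem measurePreserving_rotation_fockMeasure (c : Circle) :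
    MeasurePreserving (rotation c) fockMeasure fockMeasure :=
  measurePreserving_withDensity_of_comp_eq (rotation c).measurePreserving (by fun_prop)
    fun z => by rw [LinearIsometryEquiv.norm_map]

theorem measurePreserving_rotation_fockMeasure_restrict {B : Set ℝ} (hB : MeasurableSet B)
    (c : Circle) :
    MeasurePreserving (rotation c) (fockMeasure.restrict (norm ⁻¹' B))
      (fockMeasure.restrict (norm ⁻¹' B)) := by
  have hpre : rotation c ⁻¹' (norm ⁻¹' B) = norm ⁻¹' B := by
    ext z
    simp only [Set.mem_preimage, LinearIsometryEquiv.norm_map]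
  simpa only [hpre] using
    (measurePreserving_rotation_fockMeasure c).restrict_preimage (measurable_norm hB)

theorem integrable_norm_pow_fockMeasure (k : ℕ) :
    Integrable (fun z : ℂ => ‖z‖ ^ k) fockMeasure := by
  rw [fockMeasure, integrable_withDensity_iff (by fun_prop)
    (ae_of_all _ fun _ => ENNReal.ofReal_lt_top)]
  simp only [ENNReal.toReal_ofReal (show 0 ≤ 1 / π * exp _ by positivity)]
  rw [integrable_fun_norm_addHaar volume (f := fun r : ℝ => r ^ k * (1 / π * exp (-r ^ 2)))]
  have hgauss := (integrable_rpow_mul_exp_neg_mul_sq one_pos (s := (k + 1 : ℕ))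
    (neg_one_lt_zero.trans_le (Nat.cast_nonneg _))).const_mul (1 / π)
  refine hgauss.integrableOn.congr_fun (fun r _ => ?_) measurableSet_Ioi
  simp only [Complex.finrank_real_complex, rpow_natCast, smul_eq_mul]
  ring_nf

theorem integral_norm_pow_two_mul_fockMeasure (n : ℕ) :
    ∫ z, ‖z‖ ^ (2 * n) ∂fockMeasure = n ! := by
  have hGamma := Complex.integral_rpow_mul_exp_neg_rpow (p := 2) (q := (2 * n : ℕ)) one_le_two
    (by linarith [Nat.cast_nonneg (α := ℝ) (2 * n)])
  have hexp : (((2 * n : ℕ) : ℝ) + 2) / 2 = n + 1 := by push_cast; ring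
  simp only [rpow_natCast, rpow_two, hexp, Gamma_nat_eq_factorial] at hGamma
  rw [integral_fockMeasure, hGamma]
  field_simp

theorem setIntegral_norm_preimage (f : ℝ → ℝ) {B : Set ℝ} (hB : MeasurableSet B) :
    ∫ z : ℂ in norm ⁻¹' B, f ‖z‖ = 2 * π * ∫ r in Set.Ioi 0 ∩ B, r * f r := by
  have hball : (volume : Measure ℂ).real (Metric.ball 0 1) = π := by
    simp [Measure.real, Complex.volume_ball]
  have hind : ∫ z : ℂ in norm ⁻¹' B, f ‖z‖ = ∫ z : ℂ, B.indicator f ‖z‖ :=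
    (integral_indicator (measurable_norm hB)).symm
  rw [hind, integral_fun_norm_addHaar volume, hball, Complex.finrank_real_complex,
    ← setIntegral_indicator hB]
  simp only [Nat.add_one_sub_one, pow_one, smul_eq_mul, nsmul_eq_mul, Nat.cast_ofNat, mul_assoc,
    Set.indicator_mul_right]

theorem setIntegral_norm_pow_two_mul_fockMeasure (n : ℕ) {B : Set ℝ} (hB : MeasurableSet B) :
    ∫ z in norm ⁻¹' B, ‖z‖ ^ (2 * n) ∂fockMeasure =
      2 * ∫ r in Set.Ioi 0 ∩ B, r ^ (2 * n + 1) * exp (-r ^ 2) := by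
  rw [setIntegral_fockMeasure _ (measurable_norm hB),
    setIntegral_norm_preimage (fun r => r ^ (2 * n) * exp (-r ^ 2)) hB]
  simp only [pow_succ', mul_assoc]
  field_simp

end FockMeasure

section MomentBounds

theorem rpow_two_mul_mul_exp_neg_sq_le {x r : ℝ} (hx : 0 < x) (hr : 0 ≤ r) :
    r ^ (2 * x) * exp (-r ^ 2) ≤ x ^ x * exp (-x) * exp (-(r - √x) ^ 2) := by
  have hs : 0 < √x := sqrt_pos.mpr hx
  have hsq : √x ^ 2 = x := sq_sqrt hx.le
  have hsx : √x ^ (2 * x) = x ^ x := by rw [rpow_mul hs.le, rpow_two, hsq]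
  have htangent : r / √x ≤ exp (r / √x - 1) := by linarith [add_one_le_exp (r / √x - 1)]
  have hexp : (r / √x - 1) * (2 * x) = 2 * √x * r - 2 * x := by
    field_simp
    linear_combination -r * hsq
  have hratio : r ^ (2 * x) ≤ x ^ x * exp (2 * √x * r - 2 * x) := by
    have hpow := rpow_le_rpow (by positivity) htangent (by positivity : 0 ≤ 2 * x)
    rw [← exp_mul, hexp, div_rpow hr hs.le, hsx, div_le_iff₀' (by positivity)] at hpow
    exact hpow
  calc r ^ (2 * x) * exp (-r ^ 2)
      ≤ x ^ x * exp (2 * √x * r - 2 * x) * exp (-r ^ 2) := by gcongr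
    _ = x ^ x * exp (-x) * exp (-(r - √x) ^ 2) := by
      have hsplit : exp (2 * √x * r - 2 * x) * exp (-r ^ 2) = exp (-x) * exp (-(r - √x) ^ 2) := by
        rw [← exp_add, ← exp_add]
        congr 1
        linear_combination hsq
      linear_combination x ^ x * hsplit

theorem add_half_rpow_le {n : ℕ} (hn : n ≠ 0) :
    (n + 1 / 2 : ℝ) ^ (n + 1 / 2 : ℝ) ≤ n ^ n * √n * exp (3 / 4) := by
  have hn1 : (1 : ℝ) ≤ n := by exact_mod_cast Nat.one_le_iff_ne_zero.mpr hn
  have hbase : (n + 1 / 2 : ℝ) ≤ n * exp (1 / (2 * n)) := by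
    calc (n + 1 / 2 : ℝ) = n * (1 / (2 * n) + 1) := by field_simp; ring
      _ ≤ n * exp (1 / (2 * n)) := by gcongr; exact add_one_le_exp _
  have hexponent : 1 / (2 * n) * (n + 1 / 2 : ℝ) ≤ 3 / 4 := by
    field_simp
    linarith
  calc (n + 1 / 2 : ℝ) ^ (n + 1 / 2 : ℝ)
      ≤ (n * exp (1 / (2 * n))) ^ (n + 1 / 2 : ℝ) := by gcongr
    _ = n ^ n * √n * exp (1 / (2 * n) * (n + 1 / 2)) := by
      rw [mul_rpow (by positivity) (by positivity), ← exp_mul, rpow_add (by positivity),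
        rpow_natCast, sqrt_eq_rpow]
    _ ≤ n ^ n * √n * exp (3 / 4) := by gcongr

theorem two_mul_add_half_rpow_mul_exp_neg_le_factorial (n : ℕ) :
    2 * ((n + 1 / 2 : ℝ) ^ (n + 1 / 2 : ℝ) * exp (-(n + 1 / 2 : ℝ))) ≤ exp (1 / 4) * n ! := by
  rcases eq_or_ne n 0 with rfl | hn
  · have hhalf : (1 / 2 : ℝ) ^ (1 / 2 : ℝ) ≤ 3 / 4 := by
      rw [← sqrt_eq_rpow]
      exact sqrt_le_iff.mpr (by norm_num)
    have hexp : 3 / 2 ≤ exp (3 / 4) := by linarith [add_one_le_exp (3 / 4 : ℝ)]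
    simp only [Nat.cast_zero, zero_add, Nat.factorial_zero, Nat.cast_one, mul_one]
    calc 2 * ((1 / 2 : ℝ) ^ (1 / 2 : ℝ) * exp (-(1 / 2)))
        ≤ 2 * (3 / 4 * exp (-(1 / 2))) := by gcongr
      _ = 3 / 2 * exp (-(1 / 2)) := by ring
      _ ≤ exp (3 / 4) * exp (-(1 / 2)) := by gcongr
      _ = exp (1 / 4) := by rw [← exp_add]; norm_num
  have hsqrt : 2 * √n ≤ √(2 * π * n) := by
    apply le_sqrt_of_sq_le
    rw [mul_pow, sq_sqrt n.cast_nonneg]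
    nlinarith [pi_gt_three, n.cast_nonneg (α := ℝ)]
  have hstirling : √(2 * π * n) * (n ^ n * exp (-n)) ≤ n ! := by
    have hpow : (n / exp 1) ^ n = n ^ n * exp (-n) := by
      rw [div_pow, ← exp_nat_mul, mul_one, exp_neg, div_eq_mul_inv]
    simpa only [hpow] using Stirling.le_factorial_stirling n
  have hexp : exp (3 / 4) * exp (-(n + 1 / 2 : ℝ)) = exp (1 / 4) * exp (-n) := by
    rw [← exp_add, ← exp_add]
    ring_nf
  calc 2 * ((n + 1 / 2 : ℝ) ^ (n + 1 / 2 : ℝ) * exp (-(n + 1 / 2 : ℝ)))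
      ≤ 2 * (n ^ n * √n * exp (3 / 4) * exp (-(n + 1 / 2 : ℝ))) := by
        gcongr
        exact add_half_rpow_le hn
    _ = exp (1 / 4) * (2 * √n * (n ^ n * exp (-n))) := by
        linear_combination 2 * n ^ n * √n * hexp
    _ ≤ exp (1 / 4) * n ! := by
        gcongr
        exact hstirling.trans' (by gcongr)

theorem two_mul_pow_mul_exp_neg_sq_le (n : ℕ) {r : ℝ} (hr : 0 ≤ r) :
    2 * (r ^ (2 * n + 1) * exp (-r ^ 2)) ≤
      exp (1 / 4) * n ! * exp (-(r - √(n + 1 / 2)) ^ 2) := by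
  have hpeak := rpow_two_mul_mul_exp_neg_sq_le (x := n + 1 / 2) (by positivity) hr
  have hexponent : (2 * (n + 1 / 2) : ℝ) = (2 * n + 1 : ℕ) := by push_cast; ring
  rw [hexponent, rpow_natCast] at hpeak
  calc 2 * (r ^ (2 * n + 1) * exp (-r ^ 2))
      ≤ 2 * ((n + 1 / 2 : ℝ) ^ (n + 1 / 2 : ℝ) * exp (-(n + 1 / 2 : ℝ)) *
          exp (-(r - √(n + 1 / 2)) ^ 2)) := by gcongr
    _ = 2 * ((n + 1 / 2 : ℝ) ^ (n + 1 / 2 : ℝ) * exp (-(n + 1 / 2 : ℝ))) *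
          exp (-(r - √(n + 1 / 2)) ^ 2) := by ring
    _ ≤ exp (1 / 4) * n ! * exp (-(r - √(n + 1 / 2)) ^ 2) :=
        mul_le_mul_of_nonneg_right (two_mul_add_half_rpow_mul_exp_neg_le_factorial n)
          (exp_nonneg _)

theorem setIntegral_norm_pow_two_mul_fockMeasure_le (n : ℕ) {B : Set ℝ} (hB : MeasurableSet B)
    (hBfin : volume B ≠ ⊤) {d : ℝ} (hd : 0 ≤ d) (hdist : ∀ r ∈ B, d ≤ |r - √(n + 1 / 2)|) :
    ∫ z in norm ⁻¹' B, ‖z‖ ^ (2 * n) ∂fockMeasure ≤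
      exp (1 / 4) * n ! * exp (-d ^ 2) * volume.real B := by
  have hpoint : ∀ r ∈ Set.Ioi 0 ∩ B,
      ‖2 * (r ^ (2 * n + 1) * exp (-r ^ 2))‖ ≤ exp (1 / 4) * n ! * exp (-d ^ 2) := by
    rintro r ⟨hr, hrB⟩
    have hr0 : 0 ≤ r := le_of_lt hr
    rw [norm_of_nonneg (by positivity)]
    refine (two_mul_pow_mul_exp_neg_sq_le n hr0).trans ?_
    rw [← sq_abs (r - _)]
    gcongr
    exact hdist r hrB
  rw [setIntegral_norm_pow_two_mul_fockMeasure n hB, ← integral_const_mul]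
  calc ∫ r in Set.Ioi 0 ∩ B, 2 * (r ^ (2 * n + 1) * exp (-r ^ 2))
      ≤ exp (1 / 4) * n ! * exp (-d ^ 2) * volume.real (Set.Ioi 0 ∩ B) :=
        (le_norm_self _).trans <| norm_setIntegral_le_of_norm_le_const
          ((measure_mono Set.inter_subset_right).trans_lt hBfin.lt_top) hpoint
    _ ≤ exp (1 / 4) * n ! * exp (-d ^ 2) * volume.real B := by
        gcongr
        exact Set.inter_subset_right

end MomentBounds

section Annuli

theorem sqrt_add_half_mem_Icc (n : ℕ) :
    √(n + 1 / 2 : ℝ) ∈ Set.Icc (n.sqrt : ℝ) (n.sqrt + 1) := by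
  have hlower : (n.sqrt : ℝ) ^ 2 ≤ n := by exact_mod_cast n.sqrt_le'
  have hupper : (n : ℝ) + 1 ≤ (n.sqrt + 1) ^ 2 := by exact_mod_cast n.succ_le_succ_sqrt'
  exact ⟨le_sqrt_of_sq_le (by linarith), sqrt_le_iff.mpr ⟨by positivity, by linarith⟩⟩

theorem natDist_sub_one_le_abs_sub {p j : ℕ} {r s : ℝ} (hr : r ∈ Set.Icc (j : ℝ) (j + 1))
    (hs : s ∈ Set.Icc (p : ℝ) (p + 1)) :
    ((p.dist j - 1 : ℕ) : ℝ) ≤ |r - s| := by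
  have hcast : (p.dist j : ℝ) = |(p : ℝ) - j| := by
    rcases le_total p j with h | h
    · rw [Nat.dist_eq_sub_of_le h, Nat.cast_sub h, abs_sub_comm,
        abs_of_nonneg (sub_nonneg.mpr (Nat.cast_le.mpr h))]
    · rw [Nat.dist_eq_sub_of_le_right h, Nat.cast_sub h,
        abs_of_nonneg (sub_nonneg.mpr (Nat.cast_le.mpr h))]
  have hdist : |(p : ℝ) - j| ≤ |r - s| + 1 := by
    rw [abs_le]
    constructor <;> linarith [hr.1, hr.2, hs.1, hs.2, le_abs_self (r - s), neg_abs_le (r - s)]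
  rw [← hcast] at hdist
  rcases Nat.eq_zero_or_pos (p.dist j) with hzero | hpos
  · simp [hzero]
  · rw [Nat.cast_pred hpos]
    linarith

theorem setIntegral_annulus_norm_pow_le (n j : ℕ) :
    ∫ z in norm ⁻¹' Set.Ico (j : ℝ) (j + 1), ‖z‖ ^ (2 * n) ∂fockMeasure ≤
      exp (1 / 4) * n ! * exp (-((n.sqrt.dist j - 1 : ℕ) : ℝ) ^ 2) := by
  have hvol : volume.real (Set.Ico (j : ℝ) (j + 1)) = 1 := by simp
  have hbound := setIntegral_norm_pow_two_mul_fockMeasure_le n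
    (measurableSet_Ico (a := (j : ℝ)) (b := j + 1)) measure_Ico_lt_top.ne (Nat.cast_nonneg _)
    fun r hr => natDist_sub_one_le_abs_sub (Set.Ico_subset_Icc_self hr) (sqrt_add_half_mem_Icc n)
  rwa [hvol, mul_one] at hbound

theorem sum_natDist_sub_one_le {f : ℕ → ℝ} (hf : ∀ m, 0 ≤ f m) (hfs : Summable f)
    (M p : ℕ) (T : Finset ℕ) :
    ∑ j ∈ T with M < p.dist j, f (p.dist j - 1) ≤
      2 * ∑' m, if M ≤ m then f m else 0 := by
  set T' := {j ∈ T | M < p.dist j} with hT'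
  have hcard (m : ℕ) : ({j ∈ T' | p.dist j - 1 = m} : Finset ℕ).card ≤ 2 := by
    have hsub : {j ∈ T' | p.dist j - 1 = m} ⊆ {p + m + 1, p - m - 1} := by
      intro j hj
      simp only [hT', Finset.mem_filter, Finset.mem_insert, Finset.mem_singleton] at hj ⊢
      unfold Nat.dist at hj
      omega
    exact (Finset.card_le_card hsub).trans Finset.card_le_two
  have hge : ∀ m ∈ T'.image fun j => p.dist j - 1, M ≤ m := by
    intro m hm
    obtain ⟨j, hj, rfl⟩ := Finset.mem_image.mp hm
    exact Nat.le_sub_one_of_lt (Finset.mem_filter.mp hj).2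
  have htail_nonneg (m : ℕ) : 0 ≤ if M ≤ m then f m else 0 := by
    split_ifs
    exacts [hf m, le_rfl]
  have htail_le (m : ℕ) : (if M ≤ m then f m else 0) ≤ f m := by
    split_ifs
    exacts [le_rfl, hf m]
  rw [Finset.sum_comp f fun j => p.dist j - 1]
  calc ∑ m ∈ T'.image fun j => p.dist j - 1,
        ({j ∈ T' | p.dist j - 1 = m} : Finset ℕ).card • f m
      ≤ ∑ m ∈ T'.image fun j => p.dist j - 1, 2 * if M ≤ m then f m else 0 := by
        refine Finset.sum_le_sum fun m hm => ?_
        rw [if_pos (hge m hm), nsmul_eq_mul]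
        exact mul_le_mul_of_nonneg_right (by exact_mod_cast hcard m) (hf m)
    _ ≤ 2 * ∑' m, if M ≤ m then f m else 0 := by
        rw [← Finset.mul_sum]
        gcongr
        exact (hfs.of_nonneg_of_le htail_nonneg htail_le).sum_le_tsum _ fun m _ => htail_nonneg m

theorem sum_setIntegral_annulus_norm_pow_le (M n : ℕ) (T : Finset ℕ) :
    ∑ j ∈ T with M < n.sqrt.dist j,
        ∫ z in norm ⁻¹' Set.Ico (j : ℝ) (j + 1), ‖z‖ ^ (2 * n) ∂fockMeasure ≤
      ηtail M * n ! := by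
  have hsummable : Summable fun m : ℕ => exp (-(m : ℝ) ^ 2) :=
    summable_exp_neg_nat.of_nonneg_of_le (fun _ => by positivity) fun m => by
      gcongr
      exact_mod_cast Nat.le_self_pow two_ne_zero m
  calc ∑ j ∈ T with M < n.sqrt.dist j,
        ∫ z in norm ⁻¹' Set.Ico (j : ℝ) (j + 1), ‖z‖ ^ (2 * n) ∂fockMeasure
      ≤ ∑ j ∈ T with M < n.sqrt.dist j,
          exp (1 / 4) * n ! * exp (-((n.sqrt.dist j - 1 : ℕ) : ℝ) ^ 2) :=
        Finset.sum_le_sum fun j _ => setIntegral_annulus_norm_pow_le n j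
    _ ≤ exp (1 / 4) * n ! * (2 * ∑' m : ℕ, if M ≤ m then exp (-(m : ℝ) ^ 2) else 0) := by
        rw [← Finset.mul_sum]
        gcongr
        exact sum_natDist_sub_one_le (fun _ => by positivity) hsummable M n.sqrt T
    _ = ηtail M * n ! := by rw [ηtail]; ring

end Annuli

section Blocks

theorem Vpart_eq_sum (M D j : ℕ) (a : ℕ → ℂ) (z : ℂ) :
    Vpart M D j a z =
      ∑ n ∈ Finset.Icc 1 D with n.sqrt.dist j ≤ M, a n * z ^ n := by
  have hmaps : ∀ n ∈ (Finset.Icc 1 D).filter fun n => n.sqrt.dist j ≤ M,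
      n.sqrt ∈ (Finset.range (j + M + 1)).filter
        fun ℓ : ℕ => 1 ≤ ℓ ∧ ((ℓ : ℤ) - (j : ℤ)).natAbs ≤ M := by
    intro n hn
    simp only [Finset.mem_filter, Finset.mem_Icc, Finset.mem_range] at hn ⊢
    have hpos := Nat.sqrt_pos.mpr hn.1.1
    unfold Nat.dist at hn
    omega
  rw [Vpart, ← Finset.sum_fiberwise_of_maps_to hmaps]
  refine Finset.sum_congr rfl fun ℓ hℓ => Finset.sum_congr ?_ fun _ _ => rfl
  ext n
  simp only [Finset.mem_filter] at hℓ ⊢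
  rw [← Nat.eq_sqrt']
  constructor
  · rintro ⟨hn, rfl⟩
    exact ⟨⟨hn, by unfold Nat.dist; omega⟩, rfl⟩
  · rintro ⟨⟨hn, -⟩, rfl⟩
    exact ⟨hn, rfl⟩

theorem sum_sub_Vpart (M D j : ℕ) (a : ℕ → ℂ) (z : ℂ) :
    ∑ n ∈ Finset.Icc 1 D, a n * z ^ n - Vpart M D j a z =
      ∑ n ∈ Finset.Icc 1 D with M < n.sqrt.dist j, a n * z ^ n := by
  rw [Vpart_eq_sum, sub_eq_iff_eq_add']
  simpa only [not_le] using (Finset.sum_filter_add_sum_filter_not (Finset.Icc 1 D)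
    (fun n => n.sqrt.dist j ≤ M) fun n => a n * z ^ n).symm

end Blocks

section Leakage

variable {E : Type*} [NormedAddCommGroup E] [InnerProductSpace ℂ E]

theorem fockNorm_sum_pow_smul_sq (S : Finset ℕ) (a : ℕ → E) :
    fockNorm (fun z => ∑ n ∈ S, z ^ n • a n) ^ 2 = ∑ n ∈ S, ‖a n‖ ^ 2 * n ! := by
  simp only [fockNorm_sq, integral_norm_sum_pow_smul_sq measurePreserving_rotation_fockMeasure
    integrable_norm_pow_fockMeasure, integral_norm_pow_two_mul_fockMeasure]

theorem setIntegral_norm_preimage_norm_sum_pow_smul_sq {B : Set ℝ} (hB : MeasurableSet B)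
    (S : Finset ℕ) (a : ℕ → E) :
    1 / π * ∫ z : ℂ in norm ⁻¹' B, ‖∑ n ∈ S, z ^ n • a n‖ ^ 2 * exp (-‖z‖ ^ 2) =
      ∑ n ∈ S, ‖a n‖ ^ 2 * ∫ z in norm ⁻¹' B, ‖z‖ ^ (2 * n) ∂fockMeasure := by
  rw [← setIntegral_fockMeasure _ (measurable_norm hB)]
  exact integral_norm_sum_pow_smul_sq (measurePreserving_rotation_fockMeasure_restrict hB)
    (fun k => (integrable_norm_pow_fockMeasure k).restrict) S a

theorem stmt12_general (M : ℕ) (S : Finset ℕ) (a : ℕ → E) :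
    ∑' j : ℕ, 1 / π * ∫ z in {z : ℂ | (j : ℝ) ≤ ‖z‖ ∧ ‖z‖ < (j : ℝ) + 1},
        ‖∑ n ∈ S with M < n.sqrt.dist j, z ^ n • a n‖ ^ 2 * exp (-‖z‖ ^ 2) ≤
      ηtail M * fockNorm (fun z => ∑ n ∈ S, z ^ n • a n) ^ 2 := by
  let A (j : ℕ) : Set ℂ := norm ⁻¹' Set.Ico (j : ℝ) (j + 1)
  refine tsum_le_of_sum_range_le (fun j => ?_) fun N => ?_
  · exact mul_nonneg (by positivity) (integral_nonneg fun z => by positivity)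
  calc _ = ∑ j ∈ Finset.range N, ∑ n ∈ S with M < n.sqrt.dist j,
          ‖a n‖ ^ 2 * ∫ z in A j, ‖z‖ ^ (2 * n) ∂fockMeasure :=
        Finset.sum_congr rfl fun j _ =>
          setIntegral_norm_preimage_norm_sum_pow_smul_sq measurableSet_Ico _ a
    _ = ∑ n ∈ S, ‖a n‖ ^ 2 * ∑ j ∈ Finset.range N with M < n.sqrt.dist j,
          ∫ z in A j, ‖z‖ ^ (2 * n) ∂fockMeasure := by
        simp only [Finset.mul_sum, Finset.sum_filter, mul_ite, mul_zero]
        exact Finset.sum_comm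
    _ ≤ ∑ n ∈ S, ‖a n‖ ^ 2 * (ηtail M * n !) := by
        gcongr with n
        exact sum_setIntegral_annulus_norm_pow_le M n _
    _ = ηtail M * fockNorm (fun z => ∑ n ∈ S, z ^ n • a n) ^ 2 := by
        rw [fockNorm_sum_pow_smul_sq, Finset.mul_sum]
        exact Finset.sum_congr rfl fun n _ => mul_left_comm _ _ _

end Leakage

end

/-- **Total leakage estimate.** For `M ≥ 2`, with `U(z) = Σ_{n=1}^D a_n zⁿ`,
`V_j` as above and `R_j = U − V_j`, one has
`Σ_{j ≥ 0} (1/π) ∫_{j ≤ |z| < j+1} |R_j|² e^{−|z|²} dm ≤ η_M ‖U‖_F²`. -/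
theorem stmt12 (M : ℕ) (hM : 2 ≤ M) (D : ℕ) (hD : 1 ≤ D) (a : ℕ → ℂ) :
    (∑' j : ℕ, (1 / Real.pi) *
        ∫ z in {z : ℂ | (j : ℝ) ≤ ‖z‖ ∧ ‖z‖ < (j : ℝ) + 1},
          ‖(∑ n ∈ Finset.Icc 1 D, a n * z ^ n) - Vpart M D j a z‖ ^ 2 *
            Real.exp (-‖z‖ ^ 2))
      ≤ ηtail M * (fockNorm (fun z => ∑ n ∈ Finset.Icc 1 D, a n * z ^ n)) ^ 2 := by
  simpa only [sum_sub_Vpart, smul_eq_mul, mul_comm] using stmt12_general M (Finset.Icc 1 D) a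
end

section
/- Let M = 5. Let D ≥ 1, let a₁, …, a_D ∈ ℂ, for ℓ ≥ 1 set U_ℓ(z) = Σ_{n ∈ I_ℓ, n ≤ D} a_n z^n where I_ℓ = {n ∈ ℕ : ℓ² ≤ n < (ℓ+1)²}, and for j ≥ 0 set V_j = Σ_{1 ≤ ℓ, |ℓ−j| ≤ 5} U_ℓ. Then for every integer j ≥ 0 and every r ∈ [j, j+1], ∫_{S¹} |V_j(rζ)|² dσ(ζ) ≤ 1620² ∫_{S¹} ρ(V_j(rζ))² dσ(ζ). -/
/-!
On the circle of radius `r`, `V_j` is a polynomial `p` in `ζ` without constant term, all of whose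
frequencies have square roots within `M + 1` of `j`. Since `|1 + w|² - 1 = 2 Re w + |w|²`, a small
`ρ w` forces a small `2 Re w + |w|²`.

* If `j ≥ 33 (M + 1)`, all frequencies are within `j² / 16` of `j²`, so rotating the circle by
  `kπ / (2j²)` nearly multiplies `p` by `iᵏ`. Hence the `L²` norm of `ρ (iᵏ p)` is controlled by
  that of `ρ p`, and no `w ≠ 0` has all four numbers `ρ (iᵏ w)` small compared with `|w|`.
* If `j < 33 (M + 1)`, there is a bounded number `N` of frequencies. The average of `Re p` vanishes,
  which bounds the average `q` of `|p|²` by that of `ρ(p)²` unless `q` is small compared with `1/N`.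
  In that case `|p| ≤ 1/2` everywhere, and since the average of `Re (p²)` vanishes too,
  `q` is twice the average of `(Re p)²`, where `2 Re p` is `2 Re p + |p|²` up to lower order.
-/

open MeasureTheory

/-- The defect function `ρ(w) = ||1+w| − 1|`. -/
noncomputable def ρ (w : ℂ) : ℝ := |‖1 + w‖ - 1|

/-- Average over the circle with respect to the probability Haar measure `dσ = dt/(2π)`. -/
noncomputable def circleAvg (f : ℝ → ℝ) : ℝ :=
  (1 / (2 * Real.pi)) * ∫ t in (0 : ℝ)..(2 * Real.pi), f t

section AnnulusEstimate

open Complex Polynomial Real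
open scoped Finset

section Defect

@[fun_prop]
lemma continuous_ρ : Continuous ρ := by
  unfold ρ
  fun_prop

lemma ρ_nonneg (w : ℂ) : 0 ≤ ρ w := abs_nonneg _

lemma norm_one_add_sq (w : ℂ) : ‖1 + w‖ ^ 2 = 1 + 2 * w.re + ‖w‖ ^ 2 := by
  simp only [Complex.sq_norm, normSq_apply, add_re, add_im, one_re, one_im]
  ring

lemma ρ_le_ρ_add_norm_sub (w z : ℂ) : ρ w ≤ ρ z + ‖z - w‖ := by
  have norm_diff : |‖1 + w‖ - ‖1 + z‖| ≤ ‖z - w‖ := by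
    simpa [norm_sub_rev] using abs_norm_sub_norm_le (1 + w) (1 + z)
  have := abs_sub_abs_le_abs_sub (‖1 + w‖ - 1) (‖1 + z‖ - 1)
  rw [sub_sub_sub_cancel_right] at this
  unfold ρ
  linarith

lemma ρ_sq_le_two_mul_ρ_sq_add (w z : ℂ) : ρ w ^ 2 ≤ 2 * (ρ z ^ 2 + ‖z - w‖ ^ 2) :=
  (pow_le_pow_left₀ (ρ_nonneg w) (ρ_le_ρ_add_norm_sub w z) 2).trans add_sq_le

lemma sq_two_re_add_norm_sq_le (w : ℂ) :
    (2 * w.re + ‖w‖ ^ 2) ^ 2 ≤ (2 + ‖w‖) ^ 2 * ρ w ^ 2 := by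
  have factor : 2 * w.re + ‖w‖ ^ 2 = (‖1 + w‖ + 1) * (‖1 + w‖ - 1) := by
    linear_combination -norm_one_add_sq w
  have : ‖1 + w‖ ≤ 1 + ‖w‖ := by simpa using norm_add_le (1 : ℂ) w
  rw [factor, mul_pow, ρ, sq_abs]
  gcongr ?_ ^ 2 * _
  linarith

lemma norm_sq_le_sum_ρ_I_pow_mul_sq (w : ℂ) :
    4 / 3 * ‖w‖ ^ 2 ≤ ∑ k ∈ Finset.range 4, ρ (I ^ k * w) ^ 2 := by
  have rotated (k : ℕ) :
      (2 * (I ^ k * w).re + ‖w‖ ^ 2) ^ 2 ≤ (2 + ‖w‖) ^ 2 * ρ (I ^ k * w) ^ 2 := by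
    simpa using sq_two_re_add_norm_sq_le (I ^ k * w)
  have sum_sq : ∑ k ∈ Finset.range 4, (2 * (I ^ k * w).re + ‖w‖ ^ 2) ^ 2
      = 8 * ‖w‖ ^ 2 + 4 * ‖w‖ ^ 4 := by
    have : ‖w‖ ^ 2 = w.re * w.re + w.im * w.im := by rw [Complex.sq_norm, normSq_apply]
    simp only [Finset.sum_range_succ, Finset.sum_range_zero, I_pow_three, pow_zero, pow_one, I_sq,
      one_mul, neg_mul, neg_re, I_mul_re]
    linear_combination (-8) * this
  refine le_of_mul_le_mul_left ?_ (by positivity : 0 < (2 + ‖w‖) ^ 2)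
  calc (2 + ‖w‖) ^ 2 * (4 / 3 * ‖w‖ ^ 2)
      ≤ 8 * ‖w‖ ^ 2 + 4 * ‖w‖ ^ 4 := by nlinarith [mul_nonneg (sq_nonneg ‖w‖) (sq_nonneg (‖w‖ - 1))]
    _ ≤ (2 + ‖w‖) ^ 2 * ∑ k ∈ Finset.range 4, ρ (I ^ k * w) ^ 2 := by
      rw [← sum_sq, Finset.mul_sum]
      exact Finset.sum_le_sum fun k _ ↦ rotated k

lemma norm_sq_add_two_re_le (w : ℂ) {c : ℝ} (hc : 0 < c) :
    ‖w‖ ^ 2 + 2 * w.re ≤ (1 + c) * ρ w ^ 2 + 1 / c := by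
  have young : 2 * (‖1 + w‖ - 1) ≤ c * (‖1 + w‖ - 1) ^ 2 + 1 / c := by
    have : c * (‖1 + w‖ - 1) ^ 2 + 1 / c - 2 * (‖1 + w‖ - 1) = (c * (‖1 + w‖ - 1) - 1) ^ 2 / c := by
      field_simp
      ring
    linarith [show 0 ≤ (c * (‖1 + w‖ - 1) - 1) ^ 2 / c by positivity]
  rw [ρ, sq_abs]
  linarith [norm_one_add_sq w]

lemma three_mul_norm_sq_add_four_mul_re_sq_le {w : ℂ} (hw : ‖w‖ ≤ 1 / 2) :
    3 * ‖w‖ ^ 2 + 4 * (w ^ 2).re ≤ 25 * ρ w ^ 2 := by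
  have two_re_sq : 2 * w.re ^ 2 = ‖w‖ ^ 2 + (w ^ 2).re := by
    rw [Complex.sq_norm, normSq_apply, sq w, mul_re]
    ring
  have defect : (2 * w.re + ‖w‖ ^ 2) ^ 2 ≤ (2 + 1 / 2) ^ 2 * ρ w ^ 2 :=
    (sq_two_re_add_norm_sq_le w).trans (by gcongr)
  have quartic : (‖w‖ ^ 2) ^ 2 ≤ (1 / 2) ^ 2 * ‖w‖ ^ 2 := by
    rw [sq (‖w‖ ^ 2)]
    gcongr
  nlinarith [sq_nonneg (2 * w.re + 2 * ‖w‖ ^ 2)]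

end Defect

section CircleAverage

variable {E : Type*} [NormedAddCommGroup E] {c : ℂ} {R : ℝ}

lemma circleIntegrable_of_continuous {f : ℂ → E} (hf : Continuous f) : CircleIntegrable f c R :=
  hf.continuousOn.circleIntegrable'

lemma circleAverage_mono_of_continuous {f g : ℂ → ℝ} (hf : Continuous f) (hg : Continuous g)
    (h : ∀ z ∈ Metric.sphere c |R|, f z ≤ g z) : circleAverage f c R ≤ circleAverage g c R :=
  circleAverage_mono (circleIntegrable_of_continuous hf) (circleIntegrable_of_continuous hg) h

variable [NormedSpace ℝ E]

lemma circleAverage_fun_add_of_continuous {f g : ℂ → E} (hf : Continuous f) (hg : Continuous g) :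
    circleAverage (fun z ↦ f z + g z) c R = circleAverage f c R + circleAverage g c R :=
  circleAverage_fun_add (circleIntegrable_of_continuous hf) (circleIntegrable_of_continuous hg)

lemma circleAverage_comp_mul_left (f : ℂ → E) {u : ℂ} (hu : ‖u‖ = 1) :
    circleAverage (fun z ↦ f (u * z)) 0 R = circleAverage f 0 R := by
  have rotate (t : ℝ) : u * circleMap 0 R t = circleMap 0 R (t + u.arg) := by
    have : u = cexp (u.arg * I) := by simpa [hu] using (norm_mul_exp_arg_mul_I u).symm
    conv_lhs => rw [this]
    simp only [circleMap_zero, ofReal_add, add_mul, Complex.exp_add]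
    ring
  simp only [circleAverage_eq_integral_add (f := f) u.arg, circleAverage_def, rotate]

lemma circleAverage_re_eval (p : ℂ[X]) :
    circleAverage (fun z ↦ (p.eval z).re) 0 R = (p.coeff 0).re := by
  rw [coeff_zero_eq_eval_zero, ← (p.differentiable.diffContOnCl).circleAverage (R := R) (c := 0)]
  exact reCLM.circleAverage_comp_comm (circleIntegrable_of_continuous p.continuous)

lemma norm_eval_sq_le_card_support_mul (p : ℂ[X]) {z : ℂ} (hz : ‖z‖ = 1) :
    ‖p.eval z‖ ^ 2 ≤ #p.support * circleAverage (fun z ↦ ‖p.eval z‖ ^ 2) 0 1 := by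
  have triangle : ‖p.eval z‖ ≤ ∑ n ∈ p.support, ‖p.coeff n‖ := by
    rw [eval_eq_sum]
    exact (norm_sum_le _ _).trans_eq (by simp [hz])
  rw [← p.sum_sq_norm_coeff_eq_circleAverage]
  exact (pow_le_pow_left₀ (norm_nonneg _) triangle 2).trans sq_sum_le_card_mul_sum_sq

lemma circleAverage_norm_sq_le_of_norm_coeff_le {p q : ℂ[X]} {ε : ℝ}
    (h : ∀ n, ‖q.coeff n‖ ≤ ε * ‖p.coeff n‖) :
    circleAverage (fun z ↦ ‖q.eval z‖ ^ 2) 0 1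
      ≤ ε ^ 2 * circleAverage (fun z ↦ ‖p.eval z‖ ^ 2) 0 1 := by
  have support_subset : q.support ⊆ p.support := fun n hq ↦ by
    rw [mem_support_iff] at hq ⊢
    intro hp
    exact hq (norm_le_zero_iff.1 (by simpa [hp] using h n))
  rw [← q.sum_sq_norm_coeff_eq_circleAverage, ← p.sum_sq_norm_coeff_eq_circleAverage,
    Finset.mul_sum]
  calc ∑ n ∈ q.support, ‖q.coeff n‖ ^ 2
      ≤ ∑ n ∈ p.support, ‖q.coeff n‖ ^ 2 :=
        Finset.sum_le_sum_of_subset_of_nonneg support_subset fun n _ _ ↦ by positivity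
    _ ≤ ∑ n ∈ p.support, ε ^ 2 * ‖p.coeff n‖ ^ 2 := Finset.sum_le_sum fun n _ ↦ by
        rw [← mul_pow]
        exact pow_le_pow_left₀ (norm_nonneg _) (h n) 2

lemma circleAvg_comp_exp (f : ℂ → ℝ) :
    circleAvg (fun t ↦ f (cexp (t * I))) = circleAverage f 0 1 := by
  simp [circleAvg, circleAverage_def, circleMap_zero]

end CircleAverage

section FewFrequencies

variable {p : ℂ[X]} (hp : p.coeff 0 = 0)
include hp

lemma circleAverage_norm_sq_le_add_one_div {c : ℝ} (hc : 0 < c) :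
    circleAverage (fun z ↦ ‖p.eval z‖ ^ 2) 0 1
      ≤ (1 + c) * circleAverage (fun z ↦ ρ (p.eval z) ^ 2) 0 1 + 1 / c := by
  have pointwise : circleAverage (fun z ↦ ‖p.eval z‖ ^ 2 + (2 : ℝ) • (p.eval z).re) 0 1
      ≤ circleAverage (fun z ↦ (1 + c) • ρ (p.eval z) ^ 2 + 1 / c) 0 1 :=
    circleAverage_mono_of_continuous (by fun_prop) (by fun_prop)
      fun z _ ↦ norm_sq_add_two_re_le (p.eval z) hc
  rw [circleAverage_fun_add_of_continuous (by fun_prop) (by fun_prop),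
    circleAverage_fun_add_of_continuous (by fun_prop) (by fun_prop),
    circleAverage_fun_smul, circleAverage_fun_smul, circleAverage_const, circleAverage_re_eval,
    hp] at pointwise
  simpa using pointwise

lemma circleAverage_norm_sq_le_of_norm_eval_le
    (hsup : ∀ z ∈ Metric.sphere (0 : ℂ) 1, ‖p.eval z‖ ≤ 1 / 2) :
    3 * circleAverage (fun z ↦ ‖p.eval z‖ ^ 2) 0 1
      ≤ 25 * circleAverage (fun z ↦ ρ (p.eval z) ^ 2) 0 1 := by
  have pointwise : circleAverage (fun z ↦ (3 : ℝ) • ‖p.eval z‖ ^ 2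
        + (4 : ℝ) • ((p ^ 2).eval z).re) 0 1
      ≤ circleAverage (fun z ↦ (25 : ℝ) • ρ (p.eval z) ^ 2) 0 1 :=
    circleAverage_mono_of_continuous (by fun_prop) (by fun_prop) fun z hz ↦ by
      simpa using three_mul_norm_sq_add_four_mul_re_sq_le (hsup z (by simpa using hz))
  have coeff_sq : (p ^ 2).coeff 0 = 0 := by simp [sq, mul_coeff_zero, hp]
  rw [circleAverage_fun_add_of_continuous (by fun_prop) (by fun_prop),
    circleAverage_fun_smul, circleAverage_fun_smul, circleAverage_fun_smul, circleAverage_re_eval,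
    coeff_sq] at pointwise
  simpa using pointwise

theorem circleAverage_norm_sq_le_card_support_mul :
    circleAverage (fun z ↦ ‖p.eval z‖ ^ 2) 0 1
      ≤ (9 + 16 * #p.support) * circleAverage (fun z ↦ ρ (p.eval z) ^ 2) 0 1 := by
  set N : ℝ := (#p.support : ℝ)
  set q := circleAverage (fun z ↦ ‖p.eval z‖ ^ 2) 0 1
  set A := circleAverage (fun z ↦ ρ (p.eval z) ^ 2) 0 1
  have A_nonneg : 0 ≤ A := circleAverage_nonneg_of_nonneg fun z _ ↦ sq_nonneg _
  have NA_nonneg : 0 ≤ N * A := mul_nonneg (Nat.cast_nonneg _) A_nonneg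
  rcases le_or_gt (N * q) (1 / 4) with small | large
  · have sup_le : ∀ z ∈ Metric.sphere (0 : ℂ) 1, ‖p.eval z‖ ≤ 1 / 2 := fun z hz ↦
      (sq_le_sq₀ (norm_nonneg _) (by norm_num)).1 <|
        (norm_eval_sq_le_card_support_mul p (by simpa using hz)).trans (by linarith)
    linarith [circleAverage_norm_sq_le_of_norm_eval_le hp sup_le]
  · have N_pos : 0 < N := by
      by_contra! hN
      have : N = 0 := hN.antisymm (Nat.cast_nonneg _)
      norm_num [this] at large
    have inv_le : 1 / (8 * N) ≤ q / 2 := by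
      rw [div_le_iff₀ (by positivity)]
      linarith
    have := circleAverage_norm_sq_le_add_one_div hp (c := 8 * N) (by positivity)
    linarith

end FewFrequencies

section ConcentratedFrequencies

lemma norm_exp_pow_sub_I_pow_le {m : ℝ} (hm : 0 < m) (k n : ℕ) :
    ‖cexp ((k * (π / (2 * m)) : ℝ) * I) ^ n - I ^ k‖ ≤ k * (π / 2) * (|n - m| / m) := by
  set θ : ℝ := k * (π / (2 * m))
  have I_pow_eq : I ^ k = cexp ((m * θ : ℝ) * I) := by
    have : ((m * θ : ℝ) : ℂ) * I = k * (π / 2 * I) := by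
      rw [show m * θ = k * (π / 2) by simp only [θ]; field_simp]
      push_cast
      ring
    rw [this, Complex.exp_nat_mul, exp_pi_div_two_mul_I]
  have factor : cexp (θ * I) ^ n - I ^ k
      = cexp ((m * θ : ℝ) * I) * (cexp (I * ((n - m) * θ : ℝ)) - 1) := by
    rw [I_pow_eq, mul_sub, ← Complex.exp_add, mul_one, ← Complex.exp_nat_mul]
    congr 2
    push_cast
    ring
  calc ‖cexp (θ * I) ^ n - I ^ k‖ ≤ ‖(n - m) * θ‖ := by
        rw [factor, norm_mul, norm_exp_ofReal_mul_I, one_mul]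
        exact norm_exp_I_mul_ofReal_sub_one_le
    _ = k * (π / 2) * (|n - m| / m) := by
        rw [Real.norm_eq_abs, abs_mul, abs_of_nonneg (by positivity : 0 ≤ θ)]
        simp only [θ]
        field_simp

lemma circleAverage_ρ_mul_sq_le (p : ℂ[X]) {u c : ℂ} {ε : ℝ} (hu : ‖u‖ = 1)
    (h : ∀ n ∈ p.support, ‖u ^ n - c‖ ≤ ε) :
    circleAverage (fun z ↦ ρ (c * p.eval z) ^ 2) 0 1
      ≤ 2 * (circleAverage (fun z ↦ ρ (p.eval z) ^ 2) 0 1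
        + ε ^ 2 * circleAverage (fun z ↦ ‖p.eval z‖ ^ 2) 0 1) := by
  have coeff_le (n : ℕ) :
      ‖(p.comp (C u * X) - C c * p).coeff n‖ ≤ ε * ‖p.coeff n‖ := by
    rw [coeff_sub, comp_C_mul_X_coeff, coeff_C_mul, mul_comm, ← sub_mul, norm_mul]
    by_cases hn : n ∈ p.support
    · gcongr
      exact h n hn
    · simp [notMem_support_iff.1 hn]
  have error_le := circleAverage_norm_sq_le_of_norm_coeff_le coeff_le
  calc circleAverage (fun z ↦ ρ (c * p.eval z) ^ 2) 0 1
      ≤ circleAverage (fun z ↦ (2 : ℝ) • (ρ (p.eval (u * z)) ^ 2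
          + ‖(p.comp (C u * X) - C c * p).eval z‖ ^ 2)) 0 1 := by
        refine circleAverage_mono_of_continuous (by fun_prop) (by fun_prop) fun z _ ↦ ?_
        simpa using ρ_sq_le_two_mul_ρ_sq_add (c * p.eval z) (p.eval (u * z))
    _ = 2 * (circleAverage (fun z ↦ ρ (p.eval z) ^ 2) 0 1
          + circleAverage (fun z ↦ ‖(p.comp (C u * X) - C c * p).eval z‖ ^ 2) 0 1) := by
        rw [circleAverage_fun_smul, circleAverage_fun_add_of_continuous (by fun_prop) (by fun_prop),
          circleAverage_comp_mul_left (fun z ↦ ρ (p.eval z) ^ 2) hu, smul_eq_mul]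
    _ ≤ _ := by gcongr

theorem circleAverage_norm_sq_le_of_abs_sub_le {p : ℂ[X]} {m : ℝ} (hm : 0 < m)
    (hp : ∀ n ∈ p.support, 16 * |n - m| ≤ m) :
    circleAverage (fun z ↦ ‖p.eval z‖ ^ 2) 0 1
      ≤ 15 * circleAverage (fun z ↦ ρ (p.eval z) ^ 2) 0 1 := by
  set q := circleAverage (fun z ↦ ‖p.eval z‖ ^ 2) 0 1
  set A := circleAverage (fun z ↦ ρ (p.eval z) ^ 2) 0 1
  have rotated : ∀ k ∈ Finset.range 4,
      circleAverage (fun z ↦ ρ (I ^ k * p.eval z) ^ 2) 0 1 ≤ 2 * (A + (3 / 10) ^ 2 * q) := by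
    intro k hk
    refine circleAverage_ρ_mul_sq_le p (u := cexp ((k * (π / (2 * m)) : ℝ) * I))
      (norm_exp_ofReal_mul_I _) fun n hn ↦ (norm_exp_pow_sub_I_pow_le hm k n).trans ?_
    have k_le : (k : ℝ) ≤ 3 := by exact_mod_cast Nat.le_of_lt_succ (Finset.mem_range.1 hk)
    have pi_le : π ≤ 3.15 := pi_lt_d2.le
    have dist_le : |n - m| / m ≤ 1 / 16 := by
      rw [div_le_div_iff₀ hm (by norm_num)]
      linarith [hp n hn]
    calc k * (π / 2) * (|n - m| / m) ≤ 3 * (3.15 / 2) * (1 / 16) := by gcongr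
      _ ≤ 3 / 10 := by norm_num
  have sum_rotated : 4 / 3 * q ≤ 4 * (2 * (A + (3 / 10) ^ 2 * q)) := calc
    4 / 3 * q = circleAverage (fun z ↦ (4 / 3 : ℝ) • ‖p.eval z‖ ^ 2) 0 1 := by
        rw [circleAverage_fun_smul, smul_eq_mul]
    _ ≤ circleAverage (fun z ↦ ∑ k ∈ Finset.range 4, ρ (I ^ k * p.eval z) ^ 2) 0 1 :=
        circleAverage_mono_of_continuous (by fun_prop) (by fun_prop)
          fun z _ ↦ norm_sq_le_sum_ρ_I_pow_mul_sq (p.eval z)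
    _ = ∑ k ∈ Finset.range 4, circleAverage (fun z ↦ ρ (I ^ k * p.eval z) ^ 2) 0 1 :=
        circleAverage_fun_sum fun k _ ↦ circleIntegrable_of_continuous (by fun_prop)
    _ ≤ 4 * (2 * (A + (3 / 10) ^ 2 * q)) := by
        simpa using Finset.sum_le_card_nsmul _ _ _ rotated
  linarith [circleAverage_nonneg_of_nonneg (c := 0) (R := 1)
    fun z _ ↦ sq_nonneg (ρ (p.eval z))]

end ConcentratedFrequencies

section LocalPart

/-- The local part `Vpart M D j a` as a formal polynomial, which gives access to its coefficients.
A frequency lies in at most one block, so they are those of `a` or zero. -/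
noncomputable def VpartPoly (M D j : ℕ) (a : ℕ → ℂ) : ℂ[X] :=
  ∑ ℓ ∈ (Finset.range (j + M + 1)).filter
      (fun ℓ : ℕ ↦ 1 ≤ ℓ ∧ ((ℓ : ℤ) - (j : ℤ)).natAbs ≤ M),
    ∑ n ∈ (Finset.Icc 1 D).filter (fun n ↦ ℓ ^ 2 ≤ n ∧ n < (ℓ + 1) ^ 2), monomial n (a n)

variable {M D j : ℕ} {a : ℕ → ℂ}

lemma eval_VpartPoly (z : ℂ) : (VpartPoly M D j a).eval z = Vpart M D j a z := by
  simp [VpartPoly, Vpart, Ublock, eval_finsetSum]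

lemma Vpart_mul (r z : ℂ) : Vpart M D j a (r * z) = Vpart M D j (fun n ↦ a n * r ^ n) z := by
  simp only [Vpart, Ublock, mul_pow, mul_assoc]

lemma mem_support_VpartPoly {n : ℕ} (hn : n ∈ (VpartPoly M D j a).support) :
    1 ≤ n ∧ (j - M) ^ 2 ≤ n ∧ n < (j + M + 1) ^ 2 := by
  rw [mem_support_iff, VpartPoly, finsetSum_coeff] at hn
  obtain ⟨ℓ, hℓ, hn⟩ := Finset.exists_ne_zero_of_sum_ne_zero hn
  rw [finsetSum_coeff] at hn
  obtain ⟨k, hk, hn⟩ := Finset.exists_ne_zero_of_sum_ne_zero hn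
  obtain rfl : k = n := by
    by_contra hkn
    exact hn (coeff_monomial_of_ne _ (Ne.symm hkn))
  simp only [Finset.mem_filter, Finset.mem_range, Finset.mem_Icc] at hℓ hk
  exact ⟨hk.1.1, (Nat.pow_le_pow_left (by omega) 2).trans hk.2.1,
    hk.2.2.trans_le (Nat.pow_le_pow_left (by omega) 2)⟩

lemma coeff_zero_VpartPoly : (VpartPoly M D j a).coeff 0 = 0 := by
  by_contra h
  exact absurd (mem_support_VpartPoly (mem_support_iff.2 h)).1 (by norm_num)

lemma card_support_VpartPoly_le : #(VpartPoly M D j a).support ≤ (j + M + 1) ^ 2 := by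
  have : (VpartPoly M D j a).support ⊆ Finset.range ((j + M + 1) ^ 2) := fun n hn ↦
    Finset.mem_range.2 (mem_support_VpartPoly hn).2.2
  simpa using Finset.card_le_card this

lemma abs_sub_sq_le_of_mem_support_VpartPoly (hj : 33 * (M + 1) ≤ j) {n : ℕ}
    (hn : n ∈ (VpartPoly M D j a).support) : 16 * |(n : ℝ) - j ^ 2| ≤ j ^ 2 := by
  obtain ⟨-, lower, upper⟩ := mem_support_VpartPoly hn
  have hjR : 33 * ((M : ℝ) + 1) ≤ j := by exact_mod_cast hj
  have lowerR : ((j : ℝ) - M) ^ 2 ≤ n := by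
    rw [← Nat.cast_sub (by omega : M ≤ j)]
    exact_mod_cast lower
  have upperR : (n : ℝ) ≤ (j + M + 1) ^ 2 := by exact_mod_cast upper.le
  have dist_le : |(n : ℝ) - j ^ 2| ≤ (M + 1) * (2 * j + (M + 1)) :=
    abs_le.2 ⟨by nlinarith, by nlinarith⟩
  nlinarith

-- The factor `270` makes the constant `1620 ^ 2` at `M = 5`; the argument gives about `136`.
theorem circleAverage_norm_VpartPoly_sq_le :
    circleAverage (fun z ↦ ‖(VpartPoly M D j a).eval z‖ ^ 2) 0 1
      ≤ (270 * (M + 1)) ^ 2 * circleAverage (fun z ↦ ρ ((VpartPoly M D j a).eval z) ^ 2) 0 1 := by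
  have defect_nonneg : 0 ≤ circleAverage (fun z ↦ ρ ((VpartPoly M D j a).eval z) ^ 2) 0 1 :=
    circleAverage_nonneg_of_nonneg fun z _ ↦ sq_nonneg _
  rcases le_or_gt (33 * (M + 1)) j with hj | hj
  · have j_pos : 0 < (j : ℝ) := by exact_mod_cast (by omega : 0 < j)
    refine (circleAverage_norm_sq_le_of_abs_sub_le (pow_pos j_pos 2)
      fun n hn ↦ abs_sub_sq_le_of_mem_support_VpartPoly hj hn).trans ?_
    gcongr
    nlinarith [M.cast_nonneg (α := ℝ)]
  · have card_le : (#(VpartPoly M D j a).support : ℝ) ≤ (34 * (M + 1)) ^ 2 := by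
      exact_mod_cast card_support_VpartPoly_le.trans (Nat.pow_le_pow_left (by omega) 2)
    refine (circleAverage_norm_sq_le_card_support_mul coeff_zero_VpartPoly).trans ?_
    gcongr
    nlinarith [M.cast_nonneg (α := ℝ)]

theorem stmt13_general (M D j : ℕ) (a : ℕ → ℂ) (r : ℂ) :
    circleAvg (fun t ↦ ‖Vpart M D j a (r * cexp (t * I))‖ ^ 2)
      ≤ (270 * (M + 1)) ^ 2 * circleAvg (fun t ↦ ρ (Vpart M D j a (r * cexp (t * I))) ^ 2) := by
  have := circleAverage_norm_VpartPoly_sq_le (M := M) (D := D) (j := j) (a := fun n ↦ a n * r ^ n)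
  simpa only [← circleAvg_comp_exp, eval_VpartPoly, ← Vpart_mul] using this

end LocalPart

end AnnulusEstimate

/-- **Annulus estimate.** With `M = 5`: for every `j ≥ 0` and every `r ∈ [j, j+1]`,
`∫_{S¹} |V_j(rζ)|² dσ(ζ) ≤ 1620² ∫_{S¹} ρ(V_j(rζ))² dσ(ζ)`. -/
theorem stmt13 (D : ℕ) (hD : 1 ≤ D) (a : ℕ → ℂ) (j : ℕ) (r : ℝ)
    (hr₁ : (j : ℝ) ≤ r) (hr₂ : r ≤ (j : ℝ) + 1) :
    circleAvg (fun t => ‖Vpart 5 D j a ((r : ℂ) * Complex.exp ((t : ℂ) * Complex.I))‖ ^ 2)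
      ≤ 1620 ^ 2 *
        circleAvg (fun t =>
          (ρ (Vpart 5 D j a ((r : ℂ) * Complex.exp ((t : ℂ) * Complex.I)))) ^ 2) := by
  convert stmt13_general 5 D j a r using 2
  norm_num
end

section
/- Fix an integer d ≥ 1. There exists a constant M = M_d > 0 such that for every F in the Bargmann–Fock space F²(ℂ^d) one has inf_{|λ|=1} ‖F − λ·1‖_{F_d} ≤ M · ‖ |F| − 1 ‖_{F_d}, where the infimum is over unimodular complex scalars λ and 1 denotes the constant function one. -/
open MeasureTheory

/-- The Gaussian (Fock) norm on `ℂ^d`: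
`‖F‖_{F_d}² = (1/π^d) ∫_{ℂ^d} ‖F(z)‖² e^{−Σ_q |z_q|²} dm(z)`. -/
noncomputable def gammaNormD (d : ℕ) {E : Type*} [NormedAddCommGroup E]
    (F : (Fin d → ℂ) → E) : ℝ :=
  Real.sqrt ((1 / Real.pi ^ d) *
    ∫ z : Fin d → ℂ, ‖F z‖ ^ 2 * Real.exp (-∑ q, ‖z q‖ ^ 2))

/-!
In one variable, compare `f` on the circles of radii `r` and `2 r` around `c`. By Parseval the mean
of `|f - f c| ^ 2` over a circle is the mean of `|f| ^ 2` minus `|f c| ^ 2`, and it grows at least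
fourfold from the first circle to the second; so it is bounded by the means of `||f| ^ 2 - 1|`.
Together with the first Fourier coefficient of `|f| ^ 2`, this bounds `r |f' c|` by the quadratic
means of `|f| - 1`, whether or not `f c` is close to zero. Averaging over discs of radius
`(1 + |w| ^ 2) ^ (-1 / 2)`, on which the Gaussian is essentially constant, bounds the Gaussian `L²`
norm of `f'` with the extra weight `1 / (1 + |w| ^ 2)`, and comparing Taylor coefficients shows that
this weighted norm dominates `‖f - f 0‖`.

The resulting inequality `‖f - f 0‖ ≤ C ‖|f| - 1‖` passes to product measures: apply it to `F` in
the first variable, and then in the other variables to the slice `F (0, ·)`, whose modulus is close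
to that of `F`. Finally `F 0` is replaced by its phase, at the cost of
`||F 0| - 1| ≤ ‖F - F 0‖ + ‖|F| - 1‖`.
-/

namespace FockSpace

open Real Complex Metric Set
open scoped Nat ENNReal ComplexConjugate

/-- The `n`-th Taylor coefficient of `f` at `c`; the mean of `‖f‖ ^ 2` over a circle around `c` is
expanded in these by Parseval's identity. -/
noncomputable def taylorCoeff (f : ℂ → ℂ) (c : ℂ) (n : ℕ) : ℂ :=
  iteratedDeriv n f c / n !

section CircleAverage

variable {f : ℂ → ℂ} {c : ℂ} {r : ℝ}

lemma taylorCoeff_zero : taylorCoeff f c 0 = f c := by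
  simp [taylorCoeff]

lemma taylorCoeff_one : taylorCoeff f c 1 = deriv f c := by
  simp [taylorCoeff, iteratedDeriv_one]

lemma taylorCoeff_deriv (n : ℕ) :
    taylorCoeff (deriv f) c n = (n + 1) * taylorCoeff f c (n + 1) := by
  have : (n ! : ℂ) ≠ 0 := by exact_mod_cast n.factorial_ne_zero
  have : (n + 1 : ℂ) ≠ 0 := by exact_mod_cast n.succ_ne_zero
  rw [taylorCoeff, taylorCoeff, iteratedDeriv_succ', Nat.factorial_succ]
  push_cast
  field_simp

lemma circleAverage_inv_pow_mul (hf : Differentiable ℂ f) (hr : 0 < r) (n : ℕ) :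
    circleAverage (fun z ↦ ((z - c) ^ n)⁻¹ * f z) c r = taylorCoeff f c n := by
  have hf_ball : DifferentiableOn ℂ f (closedBall c r) := hf.differentiableOn
  have cauchy := hf_ball.circleIntegral_one_div_sub_center_pow_smul hr n
  rw [circleAverage_eq_circleIntegral hr.ne', taylorCoeff]
  have integrand : (fun z ↦ (z - c)⁻¹ • (((z - c) ^ n)⁻¹ * f z)) =
      fun z ↦ (1 / (z - c) ^ (n + 1)) • f z := by
    ext z
    simp only [smul_eq_mul, one_div, pow_succ, mul_inv]
    ring
  rw [integrand, cauchy, smul_smul]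
  have : (2 * π * I : ℂ) ≠ 0 := two_pi_I_ne_zero
  simp only [smul_eq_mul]
  field_simp

lemma circleAverage_pow_mul (hf : Differentiable ℂ f) {n : ℕ} (hn : n ≠ 0) :
    circleAverage (fun z ↦ (z - c) ^ n * f z) c r = 0 := by
  have hg : Differentiable ℂ fun z ↦ (z - c) ^ n * f z := by fun_prop
  simpa [hn] using (hg.diffContOnCl (s := ball c |r|)).circleAverage

lemma fourierCoeffOn_circleMap (hr : r ≠ 0) (n : ℤ) :
    fourierCoeffOn two_pi_pos (fun θ ↦ f (circleMap c r θ)) n =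
      r ^ n * circleAverage (fun z ↦ (z - c) ^ (-n) * f z) c r := by
  have hr' : (r : ℂ) ≠ 0 := mod_cast hr
  rw [fourierCoeffOn_eq_integral, circleAverage_def, sub_zero, one_div, mul_smul_comm,
    ← intervalIntegral.integral_const_mul]
  congr 2 with θ
  rw [fourier_coe_apply, circleMap_sub_center, circleMap_zero, mul_zpow, zpow_neg (r : ℂ),
    ← Complex.exp_int_mul, smul_eq_mul, mul_assoc (_⁻¹), mul_inv_cancel_left₀ (zpow_ne_zero n hr')]
  congr 2
  push_cast
  have : (π : ℂ) ≠ 0 := mod_cast pi_ne_zero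
  field_simp

theorem hasSum_sq_norm_taylorCoeff (hf : Differentiable ℂ f) (hr : 0 < r) :
    HasSum (fun n ↦ ‖taylorCoeff f c n‖ ^ 2 * r ^ (2 * n))
      (circleAverage (fun z ↦ ‖f z‖ ^ 2) c r) := by
  have hcont : Continuous fun θ ↦ f (circleMap c r θ) :=
    hf.continuous.comp (continuous_circleMap c r)
  have hL2 : MemLp (fun θ ↦ f (circleMap c r θ)) 2 (volume.restrict (Ioc 0 (2 * π))) :=
    (memLp_two_iff_integrable_sq_norm hcont.aestronglyMeasurable).2
      (hcont.norm.pow 2).integrableOn_Ioc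
  have parseval := hasSum_sq_fourierCoeffOn two_pi_pos hL2
  rw [sub_zero] at parseval
  rw [circleAverage_def]
  convert! (Nat.cast_injective (R := ℤ)).hasSum_iff ?_ |>.2 parseval using 2 with n
  · rw [Function.comp, fourierCoeffOn_circleMap hr.ne']
    simp only [zpow_neg, zpow_natCast]
    rw [circleAverage_inv_pow_mul hf hr, norm_mul, norm_pow, norm_real, norm_of_nonneg hr.le]
    ring
  · intro n hn
    obtain ⟨m, rfl | rfl⟩ := n.eq_nat_or_neg
    · exact absurd (mem_range_self m) hn
    have hm : m ≠ 0 := by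
      rintro rfl
      exact hn ⟨0, by simp⟩
    rw [fourierCoeffOn_circleMap hr.ne']
    simp only [neg_neg, zpow_natCast]
    rw [circleAverage_pow_mul hf hm, mul_zero, norm_zero, zero_pow two_ne_zero]

lemma taylorCoeff_sub_const (a : ℂ) {n : ℕ} (hn : n ≠ 0) :
    taylorCoeff (fun z ↦ f z - a) c n = taylorCoeff f c n := by
  obtain ⟨m, rfl⟩ := Nat.exists_eq_succ_of_ne_zero hn
  rw [taylorCoeff, taylorCoeff, iteratedDeriv_succ', iteratedDeriv_succ']
  simp only [deriv_sub_const_fun]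

lemma hasSum_sq_norm_taylorCoeff_succ (hf : Differentiable ℂ f) (hr : 0 < r) :
    HasSum (fun n ↦ ‖taylorCoeff f c (n + 1)‖ ^ 2 * r ^ (2 * (n + 1)))
      (circleAverage (fun z ↦ ‖f z - f c‖ ^ 2) c r) := by
  have parseval := hasSum_sq_norm_taylorCoeff (c := c) (hf.sub_const (f c)) hr
  rw [← hasSum_nat_add_iff' 1] at parseval
  simpa [taylorCoeff_zero, taylorCoeff_sub_const] using parseval

lemma circleAverage_sq_norm (hf : Differentiable ℂ f) (hr : 0 < r) :
    circleAverage (fun z ↦ ‖f z‖ ^ 2) c r =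
      ‖f c‖ ^ 2 + circleAverage (fun z ↦ ‖f z - f c‖ ^ 2) c r := by
  have parseval := (hasSum_nat_add_iff' 1).2 (hasSum_sq_norm_taylorCoeff (c := c) hf hr)
  rw [← parseval.unique (hasSum_sq_norm_taylorCoeff_succ hf hr)]
  simp [taylorCoeff_zero]

lemma sq_mul_sq_norm_deriv_le_circleAverage (hf : Differentiable ℂ f) (hr : 0 < r) :
    r ^ 2 * ‖deriv f c‖ ^ 2 ≤ circleAverage (fun z ↦ ‖f z - f c‖ ^ 2) c r := by
  have parseval := hasSum_sq_norm_taylorCoeff_succ (c := c) hf hr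
  have first_term := le_hasSum parseval 0 fun n _ ↦ by positivity
  simpa [taylorCoeff_one, mul_comm] using first_term

lemma four_mul_circleAverage_sq_norm_sub_le (hf : Differentiable ℂ f) (hr : 0 < r) :
    4 * circleAverage (fun z ↦ ‖f z - f c‖ ^ 2) c r ≤
      circleAverage (fun z ↦ ‖f z - f c‖ ^ 2) c (2 * r) := by
  refine hasSum_le (fun n ↦ ?_) ((hasSum_sq_norm_taylorCoeff_succ hf hr).mul_left 4)
    (hasSum_sq_norm_taylorCoeff_succ hf (by positivity))
  have : (4 : ℝ) ≤ 2 ^ (2 * (n + 1)) := by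
    calc (4 : ℝ) = 2 ^ 2 := by norm_num
      _ ≤ 2 ^ (2 * (n + 1)) := pow_le_pow_right₀ one_le_two (by lia)
  rw [mul_pow]
  nlinarith [mul_le_mul_of_nonneg_right this
    (by positivity : 0 ≤ ‖taylorCoeff f c (n + 1)‖ ^ 2 * r ^ (2 * (n + 1)))]

lemma circleIntegrable_of_continuous {E : Type*} [NormedAddCommGroup E] {g : ℂ → E}
    (hg : Continuous g) : CircleIntegrable g c r :=
  hg.continuousOn.circleIntegrable'

lemma abs_circleAverage_sq_norm_sub_one_le (hf : Continuous f) :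
    |circleAverage (fun z ↦ ‖f z‖ ^ 2) c r - 1| ≤
      circleAverage (fun z ↦ |‖f z‖ ^ 2 - 1|) c r := by
  have hint : CircleIntegrable (fun z ↦ ‖f z‖ ^ 2) c r :=
    circleIntegrable_of_continuous (hf.norm.pow 2)
  calc |circleAverage (fun z ↦ ‖f z‖ ^ 2) c r - 1|
      = |circleAverage (fun z ↦ ‖f z‖ ^ 2 - 1) c r| := by
        rw [circleAverage_fun_sub hint (circleIntegrable_const 1 c r), circleAverage_const]
    _ ≤ circleAverage (fun z ↦ |‖f z‖ ^ 2 - 1|) c r := abs_circleAverage_le_circleAverage_abs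

lemma three_mul_circleAverage_sq_norm_sub_le (hf : Differentiable ℂ f) (hr : 0 < r) :
    3 * circleAverage (fun z ↦ ‖f z - f c‖ ^ 2) c r ≤
      circleAverage (fun z ↦ |‖f z‖ ^ 2 - 1|) c r +
        circleAverage (fun z ↦ |‖f z‖ ^ 2 - 1|) c (2 * r) := by
  have h₁ := abs_le.1 (abs_circleAverage_sq_norm_sub_one_le (c := c) (r := r) hf.continuous)
  have h₂ := abs_le.1 (abs_circleAverage_sq_norm_sub_one_le (c := c) (r := 2 * r) hf.continuous)
  linarith [four_mul_circleAverage_sq_norm_sub_le (c := c) hf hr,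
    circleAverage_sq_norm (c := c) hf hr,
    circleAverage_sq_norm (c := c) hf (by positivity : 0 < 2 * r)]

lemma norm_circleAverage_le {E : Type*} [NormedAddCommGroup E] [NormedSpace ℝ E] (g : ℂ → E) :
    ‖circleAverage g c r‖ ≤ circleAverage (fun z ↦ ‖g z‖) c r := by
  rw [circleAverage_def, circleAverage_def, norm_smul, smul_eq_mul,
    norm_of_nonneg (by positivity : 0 ≤ (2 * π)⁻¹)]
  gcongr
  exact intervalIntegral.norm_integral_le_integral_norm two_pi_pos.le

lemma norm_circleAverage_conj_sub_mul_le (g : ℂ → ℂ) (hr : 0 ≤ r) :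
    ‖circleAverage (fun z ↦ conj (z - c) * g z) c r‖ ≤ r * circleAverage (fun z ↦ ‖g z‖) c r := by
  refine (norm_circleAverage_le _).trans_eq ?_
  rw [← smul_eq_mul r, ← circleAverage_fun_smul]
  refine circleAverage_congr_sphere fun z hz ↦ ?_
  have : ‖z - c‖ = r := by simpa [abs_of_nonneg hr, dist_eq_norm] using hz
  rw [norm_mul, RCLike.norm_conj, this, smul_eq_mul]

lemma circleAverage_conj_sub_mul (hf : Differentiable ℂ f) (hr : 0 < r) :
    circleAverage (fun z ↦ conj (z - c) * f z) c r = r ^ 2 * deriv f c := by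
  rw [← taylorCoeff_one, ← circleAverage_inv_pow_mul hf hr, ← smul_eq_mul, ← circleAverage_fun_smul]
  refine circleAverage_congr_sphere fun z hz ↦ ?_
  have hz : ‖z - c‖ = r := by simpa [abs_of_pos hr, dist_eq_norm] using hz
  have hne : z - c ≠ 0 := norm_pos_iff.1 (hz ▸ hr)
  have : conj (z - c) = r ^ 2 * (z - c)⁻¹ := by
    rw [eq_mul_inv_iff_mul_eq₀ hne, mul_comm, mul_conj', hz]
  simp only [this, pow_one, smul_eq_mul]
  ring

lemma circleAverage_conj_sub_mul_conj (hf : Differentiable ℂ f) :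
    circleAverage (fun z ↦ conj (z - c) * conj (f z)) c r = 0 := by
  have hint : CircleIntegrable (fun z ↦ (z - c) * f z) c r :=
    circleIntegrable_of_continuous (Continuous.mul (by fun_prop) hf.continuous)
  have := conjCLE.toContinuousLinearMap.circleAverage_comp_comm hint
  have mean_zero : circleAverage (fun z ↦ (z - c) * f z) c r = 0 := by
    simpa only [pow_one] using circleAverage_pow_mul hf one_ne_zero
  simpa [Function.comp_def, mean_zero] using this

lemma circleAverage_conj_sub_mul_sq_norm_sub_one (hf : Differentiable ℂ f) (hr : 0 < r) :
    circleAverage (fun z ↦ conj (z - c) * (‖f z‖ ^ 2 - 1 : ℝ)) c r =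
      circleAverage (fun z ↦ conj (z - c) * (‖f z - f c‖ ^ 2 : ℝ)) c r +
        conj (f c) * (r ^ 2 * deriv f c) := by
  have hfc : Continuous f := hf.continuous
  have mean_const : circleAverage (fun z ↦ conj (z - c)) c r = 0 := by
    simpa using circleAverage_conj_sub_mul_conj (c := c) (r := r) (differentiable_const (1 : ℂ))
  have expand : ∀ z, conj (z - c) * ((‖f z‖ ^ 2 - 1 : ℝ) : ℂ) =
      conj (z - c) * (‖f z - f c‖ ^ 2 : ℝ) + conj (f c) • (conj (z - c) * f z) +
        f c • (conj (z - c) * conj (f z)) - (‖f c‖ ^ 2 + 1 : ℂ) • conj (z - c) := by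
    intro z
    push_cast
    simp only [← mul_conj', map_sub, smul_eq_mul]
    ring
  simp only [expand]
  rw [circleAverage_fun_sub, circleAverage_fun_add, circleAverage_fun_add, circleAverage_fun_smul,
    circleAverage_fun_smul, circleAverage_fun_smul, circleAverage_conj_sub_mul hf hr,
    circleAverage_conj_sub_mul_conj hf, mean_const]
  · simp
  all_goals exact circleIntegrable_of_continuous (by fun_prop)

lemma mul_norm_mul_norm_deriv_le (hf : Differentiable ℂ f) (hr : 0 < r) :
    r * ‖deriv f c‖ * ‖f c‖ ≤ circleAverage (fun z ↦ |‖f z‖ ^ 2 - 1|) c r +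
      circleAverage (fun z ↦ ‖f z - f c‖ ^ 2) c r := by
  have h₁ := norm_circleAverage_conj_sub_mul_le (c := c) (fun z ↦ ((‖f z‖ ^ 2 - 1 : ℝ) : ℂ)) hr.le
  have h₂ := norm_circleAverage_conj_sub_mul_le (c := c)
    (fun z ↦ ((‖f z - f c‖ ^ 2 : ℝ) : ℂ)) hr.le
  simp only [norm_real, norm_eq_abs, abs_sq] at h₁ h₂
  refine le_of_mul_le_mul_left ?_ hr
  calc r * (r * ‖deriv f c‖ * ‖f c‖) = ‖conj (f c) * (r ^ 2 * deriv f c)‖ := by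
        rw [norm_mul, norm_mul, RCLike.norm_conj, norm_pow, norm_real, norm_of_nonneg hr.le]
        ring
    _ ≤ _ := by
        rw [← sub_eq_iff_eq_add'.2 (circleAverage_conj_sub_mul_sq_norm_sub_one (c := c) hf hr),
          mul_add]
        exact (norm_sub_le _ _).trans (add_le_add h₁ h₂)

lemma one_sub_sq_norm_le (hf : Differentiable ℂ f) (hr : 0 < r) :
    1 - ‖f c‖ ^ 2 ≤ circleAverage (fun z ↦ |‖f z‖ ^ 2 - 1|) c r +
      circleAverage (fun z ↦ ‖f z - f c‖ ^ 2) c r := by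
  linarith [circleAverage_sq_norm (c := c) hf hr,
    (abs_le.1 (abs_circleAverage_sq_norm_sub_one_le (c := c) (r := r) hf.continuous)).1]

lemma sq_circleAverage_abs_le {g : ℂ → ℝ} (hg : Continuous g) :
    circleAverage (fun z ↦ |g z|) c r ^ 2 ≤ circleAverage (fun z ↦ g z ^ 2) c r := by
  set m := circleAverage (fun z ↦ |g z|) c r
  have hle : circleAverage (fun z ↦ (2 * m) • |g z| - m ^ 2) c r ≤
      circleAverage (fun z ↦ g z ^ 2) c r := by
    refine circleAverage_mono (circleIntegrable_of_continuous (by fun_prop))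
      (circleIntegrable_of_continuous (by fun_prop)) fun z _ ↦ ?_
    simp only [smul_eq_mul]
    nlinarith [sq_nonneg (|g z| - m), sq_abs (g z)]
  rw [circleAverage_fun_sub (circleIntegrable_of_continuous (by fun_prop))
    (circleIntegrable_const _ c r), circleAverage_fun_smul, circleAverage_const] at hle
  change (2 * m) • m - m ^ 2 ≤ _ at hle
  simp only [smul_eq_mul] at hle
  linarith

lemma circleAverage_abs_sq_norm_sub_one_le (hf : Continuous f) :
    circleAverage (fun z ↦ |‖f z‖ ^ 2 - 1|) c r ≤
      circleAverage (fun z ↦ (‖f z‖ - 1) ^ 2) c r +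
        2 * √(circleAverage (fun z ↦ (‖f z‖ - 1) ^ 2) c r) := by
  have pointwise : ∀ z, |‖f z‖ ^ 2 - 1| ≤ (‖f z‖ - 1) ^ 2 + (2 : ℝ) • |‖f z‖ - 1| := by
    intro z
    calc |‖f z‖ ^ 2 - 1| = |(‖f z‖ - 1) ^ 2 + 2 * (‖f z‖ - 1)| := by ring_nf
      _ ≤ |(‖f z‖ - 1) ^ 2| + |2 * (‖f z‖ - 1)| := abs_add_le _ _
      _ = (‖f z‖ - 1) ^ 2 + (2 : ℝ) • |‖f z‖ - 1| := by
        rw [abs_sq, abs_mul, abs_two, smul_eq_mul]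
  calc circleAverage (fun z ↦ |‖f z‖ ^ 2 - 1|) c r
      ≤ circleAverage (fun z ↦ (‖f z‖ - 1) ^ 2 + (2 : ℝ) • |‖f z‖ - 1|) c r :=
        circleAverage_mono (circleIntegrable_of_continuous (by fun_prop))
          (circleIntegrable_of_continuous (by fun_prop)) fun z _ ↦ pointwise z
    _ = circleAverage (fun z ↦ (‖f z‖ - 1) ^ 2) c r +
        2 * circleAverage (fun z ↦ |‖f z‖ - 1|) c r := by
      rw [circleAverage_fun_add (circleIntegrable_of_continuous (by fun_prop))
        (circleIntegrable_of_continuous (by fun_prop)), circleAverage_fun_smul, smul_eq_mul]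
    _ ≤ _ := by
      gcongr
      exact le_sqrt_of_sq_le (sq_circleAverage_abs_le (by fun_prop))

lemma sq_mul_sq_norm_deriv_le_sq (hf : Differentiable ℂ f) (hr : 0 < r) :
    r ^ 2 * ‖deriv f c‖ ^ 2 ≤ 20 / 9 * (circleAverage (fun z ↦ |‖f z‖ ^ 2 - 1|) c r +
        circleAverage (fun z ↦ |‖f z‖ ^ 2 - 1|) c (2 * r)) ^ 2 := by
  have hK := three_mul_circleAverage_sq_norm_sub_le (c := c) hf hr
  have hD := sq_mul_sq_norm_deriv_le_circleAverage (c := c) hf hr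
  have hDa := mul_norm_mul_norm_deriv_le (c := c) hf hr
  have ha := one_sub_sq_norm_le (c := c) hf hr
  have hB : 0 ≤ circleAverage (fun z ↦ |‖f z‖ ^ 2 - 1|) c (2 * r) :=
    circleAverage_nonneg_of_nonneg fun z _ ↦ abs_nonneg _
  set K := circleAverage (fun z ↦ ‖f z - f c‖ ^ 2) c r
  set X := circleAverage (fun z ↦ |‖f z‖ ^ 2 - 1|) c r +
    circleAverage (fun z ↦ |‖f z‖ ^ 2 - 1|) c (2 * r)
  have hX₀ : 0 ≤ X := by nlinarith [sq_nonneg (r * ‖deriv f c‖)]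
  -- `D ^ 2 = (D * |f c|) ^ 2 + D ^ 2 * (1 - |f c| ^ 2)` with `D = r * |f' c|`; the first term
  -- matters when `|f c|` is large, the second one when it is small.
  have large : (r * ‖deriv f c‖ * ‖f c‖) ^ 2 ≤ (4 / 3 * X) ^ 2 := by
    refine pow_le_pow_left₀ (by positivity) ?_ 2
    linarith
  have small : r ^ 2 * ‖deriv f c‖ ^ 2 * (1 - ‖f c‖ ^ 2) ≤ X / 3 * (4 / 3 * X) := by
    calc r ^ 2 * ‖deriv f c‖ ^ 2 * (1 - ‖f c‖ ^ 2) ≤ r ^ 2 * ‖deriv f c‖ ^ 2 * (4 / 3 * X) := by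
          refine mul_le_mul_of_nonneg_left ?_ (by positivity)
          linarith
      _ ≤ X / 3 * (4 / 3 * X) := by
          gcongr
          linarith
  linarith

theorem sq_mul_sq_norm_deriv_le (hf : Differentiable ℂ f) (hr : 0 < r) :
    r ^ 2 * ‖deriv f c‖ ^ 2 ≤ 40 * (circleAverage (fun z ↦ (‖f z‖ - 1) ^ 2) c r +
      circleAverage (fun z ↦ (‖f z‖ - 1) ^ 2) c (2 * r)) := by
  have hK := three_mul_circleAverage_sq_norm_sub_le (c := c) hf hr
  have hD := sq_mul_sq_norm_deriv_le_circleAverage (c := c) hf hr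
  have hD_sq := sq_mul_sq_norm_deriv_le_sq (c := c) hf hr
  have hB₁ := circleAverage_abs_sq_norm_sub_one_le (c := c) (r := r) hf.continuous
  have hB₂ := circleAverage_abs_sq_norm_sub_one_le (c := c) (r := 2 * r) hf.continuous
  have hE : ∀ t, 0 ≤ circleAverage (fun z ↦ (‖f z‖ - 1) ^ 2) c t :=
    fun t ↦ circleAverage_nonneg_of_nonneg fun z _ ↦ sq_nonneg _
  have hs_sq := sq_sqrt (hE r)
  have ht_sq := sq_sqrt (hE (2 * r))
  set X := circleAverage (fun z ↦ |‖f z‖ ^ 2 - 1|) c r +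
    circleAverage (fun z ↦ |‖f z‖ ^ 2 - 1|) c (2 * r)
  set s := √(circleAverage (fun z ↦ (‖f z‖ - 1) ^ 2) c r)
  set t := √(circleAverage (fun z ↦ (‖f z‖ - 1) ^ 2) c (2 * r))
  have hs : 0 ≤ s := sqrt_nonneg _
  have ht : 0 ≤ t := sqrt_nonneg _
  have hX₀ : 0 ≤ X := by nlinarith [sq_nonneg (r * ‖deriv f c‖)]
  rw [← hs_sq, ← ht_sq]
  rcases le_total 1 (s ^ 2 + t ^ 2) with large | small
  · have hX : X ≤ 4 * (s ^ 2 + t ^ 2) := by linarith [sq_nonneg (s - 1), sq_nonneg (t - 1)]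
    linarith [sq_nonneg s, sq_nonneg t]
  · have hX : X ≤ 3 * (s + t) := by nlinarith
    calc r ^ 2 * ‖deriv f c‖ ^ 2 ≤ 20 / 9 * X ^ 2 := hD_sq
      _ ≤ 20 / 9 * (3 * (s + t)) ^ 2 := by gcongr
      _ ≤ 40 * (s ^ 2 + t ^ 2) := by linarith [sq_nonneg (s - t)]

end CircleAverage

section Polar

lemma lintegral_circleMap_eq_circleAverage {g : ℂ → ℝ} (hg : Continuous g) (hg₀ : ∀ z, 0 ≤ g z)
    (c : ℂ) (r : ℝ) :
    ∫⁻ θ in Ioo (-π) π, ENNReal.ofReal (g (circleMap c r θ)) =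
      ENNReal.ofReal (2 * π * circleAverage g c r) := by
  have hcont : Continuous fun θ ↦ g (circleMap c r θ) := hg.comp (continuous_circleMap c r)
  have hint : IntegrableOn (fun θ ↦ g (circleMap c r θ)) (Ioo (-π) π) :=
    (hcont.integrableOn_Icc (a := -π) (b := π)).mono_set Ioo_subset_Icc_self
  rw [circleAverage_eq_integral_add (-π), smul_eq_mul, mul_inv_cancel_left₀ two_pi_pos.ne',
    intervalIntegral.integral_comp_add_right (fun θ ↦ g (circleMap c r θ)), zero_add,
    show 2 * π + -π = π by ring, intervalIntegral.integral_of_le (by linarith [pi_pos]),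
    ← integral_Ioc_eq_integral_Ioo.symm, ofReal_integral_eq_lintegral_ofReal hint]
  exact Filter.Eventually.of_forall fun θ ↦ hg₀ _

theorem lintegral_mul_norm_sub_eq_circleAverage {g : ℂ → ℝ} (hg : Continuous g)
    (hg₀ : ∀ z, 0 ≤ g z) {W : ℝ → ℝ≥0∞} (hW : Measurable W) (c : ℂ) :
    ∫⁻ z, ENNReal.ofReal (g z) * W ‖z - c‖ =
      ∫⁻ r in Ioi 0, ENNReal.ofReal (2 * π * r * circleAverage g c r) * W r := by
  have polar : ∀ p ∈ Ioi (0 : ℝ) ×ˢ Ioo (-π) π, ENNReal.ofReal p.1 •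
      (ENNReal.ofReal (g (Complex.polarCoord.symm p + c)) *
        W ‖Complex.polarCoord.symm p + c - c‖) =
      ENNReal.ofReal p.1 * W p.1 * ENNReal.ofReal (g (circleMap c p.1 p.2)) := by
    rintro ⟨r, θ⟩ ⟨hr, -⟩
    have hcircle : Complex.polarCoord.symm (r, θ) + c = circleMap c r θ := by
      rw [Complex.polarCoord_symm_apply, circleMap, exp_mul_I, add_comm]
      simp
    rw [add_sub_cancel_right, hcircle, Complex.norm_polarCoord_symm, abs_of_pos hr, smul_eq_mul]
    ring
  rw [← lintegral_add_right_eq_self _ c, ← Complex.lintegral_comp_polarCoord_symm,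
    polarCoord_target, setLIntegral_congr_fun (by measurability) polar,
    Measure.volume_eq_prod, ← Measure.prod_restrict, lintegral_prod _ (by fun_prop)]
  refine setLIntegral_congr_fun measurableSet_Ioi fun r (hr : 0 < r) ↦ ?_
  dsimp only
  rw [lintegral_const_mul _ (by fun_prop), lintegral_circleMap_eq_circleAverage hg hg₀,
    mul_right_comm, ← ENNReal.ofReal_mul hr.le]
  ring_nf

lemma setLIntegral_ball_eq_circleAverage {g : ℂ → ℝ} (hg : Continuous g) (hg₀ : ∀ z, 0 ≤ g z)
    (c : ℂ) {ρ : ℝ} (hρ : 0 ≤ ρ) :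
    ∫⁻ z in ball c ρ, ENNReal.ofReal (g z) =
      ENNReal.ofReal (∫ r in 0..ρ, 2 * π * r * circleAverage g c r) := by
  have hcont : Continuous fun r ↦ 2 * π * r * circleAverage g c r := by
    have := hg.circleAverage (c := c)
    fun_prop
  have hnonneg : ∀ r ∈ Ioo 0 ρ, 0 ≤ 2 * π * r * circleAverage g c r := fun r hr ↦
    mul_nonneg (mul_nonneg two_pi_pos.le hr.1.le) (circleAverage_nonneg_of_nonneg fun z _ ↦ hg₀ z)
  calc ∫⁻ z in ball c ρ, ENNReal.ofReal (g z)
      = ∫⁻ z, ENNReal.ofReal (g z) * (Iio ρ).indicator 1 ‖z - c‖ := by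
        rw [← lintegral_indicator measurableSet_ball]
        congr with z
        by_cases hz : ‖z - c‖ < ρ <;> simp [indicator, dist_eq_norm, hz]
    _ = ∫⁻ r in Ioi 0, (Iio ρ).indicator
          (fun r ↦ ENNReal.ofReal (2 * π * r * circleAverage g c r)) r := by
        rw [lintegral_mul_norm_sub_eq_circleAverage hg hg₀
          (measurable_one.indicator measurableSet_Iio)]
        congr with r
        by_cases hr : r < ρ <;> simp [indicator, hr]
    _ = ∫⁻ r in Ioo 0 ρ, ENNReal.ofReal (2 * π * r * circleAverage g c r) := by
        rw [setLIntegral_indicator measurableSet_Iio, inter_comm, Ioi_inter_Iio]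
    _ = ENNReal.ofReal (∫ r in 0..ρ, 2 * π * r * circleAverage g c r) := by
        rw [intervalIntegral.integral_of_le hρ, integral_Ioc_eq_integral_Ioo,
          ofReal_integral_eq_lintegral_ofReal (hcont.integrableOn_Icc.mono_set Ioo_subset_Icc_self)
            (ae_restrict_of_forall_mem measurableSet_Ioo hnonneg)]

lemma integral_zero_half_comp_two_mul (J : ℝ → ℝ) (ρ : ℝ) :
    ∫ r in 0..ρ / 2, J (2 * r) = (∫ r in 0..ρ, J r) / 2 := by
  rw [intervalIntegral.integral_comp_mul_left J two_ne_zero, mul_zero,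
    mul_div_cancel₀ ρ two_ne_zero, smul_eq_mul]
  ring

lemma pow_four_mul_sq_norm_deriv_le_integral {f : ℂ → ℂ} (hf : Differentiable ℂ f) (c : ℂ) {ρ : ℝ}
    (hρ : 0 ≤ ρ) :
    π * ρ ^ 4 * ‖deriv f c‖ ^ 2 ≤
      1600 * ∫ r in 0..ρ, 2 * π * r * circleAverage (fun z ↦ (‖f z‖ - 1) ^ 2) c r := by
  set E := fun r ↦ circleAverage (fun z ↦ (‖f z‖ - 1) ^ 2) c r
  set J := fun r ↦ 2 * π * r * E r
  have hE : ∀ r, 0 ≤ E r := fun r ↦ circleAverage_nonneg_of_nonneg fun z _ ↦ sq_nonneg _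
  have hE_cont : Continuous E := by
    have := hf.continuous
    exact Continuous.circleAverage (by fun_prop)
  have hJ_cont : Continuous J := by fun_prop
  have pointwise : ∀ r ∈ Ioo 0 (ρ / 2),
      2 * π * ‖deriv f c‖ ^ 2 * r ^ 3 ≤ 40 * (J r + J (2 * r) / 2) := by
    intro r hr
    have := mul_le_mul_of_nonneg_left (sq_mul_sq_norm_deriv_le (c := c) hf hr.1)
      (by have := hr.1; positivity : 0 ≤ 2 * π * r)
    simp only [J, E]
    linarith
  have integrated : ∫ r in 0..ρ / 2, 2 * π * ‖deriv f c‖ ^ 2 * r ^ 3 ≤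
      ∫ r in 0..ρ / 2, 40 * (J r + J (2 * r) / 2) :=
    intervalIntegral.integral_mono_on_of_le_Ioo (by positivity)
      (Continuous.intervalIntegrable (by fun_prop) _ _)
      (Continuous.intervalIntegrable (by fun_prop) _ _) pointwise
  have inner_le : ∫ r in 0..ρ / 2, J r ≤ ∫ r in 0..ρ, J r := by
    refine intervalIntegral.integral_mono_interval le_rfl (by positivity) (by linarith)
      (ae_restrict_of_forall_mem measurableSet_Ioc fun r hr ↦ ?_) (hJ_cont.intervalIntegrable _ _)
    have := hr.1
    exact mul_nonneg (by positivity) (hE r)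
  rw [intervalIntegral.integral_const_mul, integral_pow, intervalIntegral.integral_const_mul,
    intervalIntegral.integral_add (hJ_cont.intervalIntegrable _ _)
      (Continuous.intervalIntegrable (by fun_prop) _ _), intervalIntegral.integral_div,
    integral_zero_half_comp_two_mul] at integrated
  linarith

theorem pow_four_mul_enorm_deriv_sq_le {f : ℂ → ℂ} (hf : Differentiable ℂ f) (c : ℂ) {ρ : ℝ}
    (hρ : 0 ≤ ρ) :
    ENNReal.ofReal (π * ρ ^ 4) * ‖deriv f c‖ₑ ^ 2 ≤
      1600 * ∫⁻ z in ball c ρ, ‖‖f z‖ - 1‖ₑ ^ 2 := by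
  have hfc := hf.continuous
  have key := pow_four_mul_sq_norm_deriv_le_integral hf c hρ
  have henorm : ∀ z, ‖‖f z‖ - 1‖ₑ ^ 2 = ENNReal.ofReal ((‖f z‖ - 1) ^ 2) := fun z ↦ by
    rw [← ofReal_norm, ← ENNReal.ofReal_pow (norm_nonneg _), norm_eq_abs, sq_abs]
  simp only [henorm]
  rw [setLIntegral_ball_eq_circleAverage (by fun_prop) (fun z ↦ sq_nonneg _) c hρ, ← ofReal_norm,
    ← ENNReal.ofReal_pow (norm_nonneg _), ← ENNReal.ofReal_mul (by positivity),
    ← ENNReal.ofReal_ofNat, ← ENNReal.ofReal_mul (by norm_num)]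
  exact ENNReal.ofReal_le_ofReal key

end Polar

section Gauss

lemma circleAverage_norm_sub_pow (c : ℂ) {r : ℝ} (hr : 0 ≤ r) (n : ℕ) :
    circleAverage (fun z ↦ ‖z - c‖ ^ n) c r = r ^ n := by
  refine circleAverage_const_on_circle fun z hz ↦ ?_
  rw [← dist_eq_norm, mem_sphere.1 hz, abs_of_nonneg hr]

theorem lintegral_sq_enorm_mul_norm_sub_eq_tsum {f : ℂ → ℂ} (hf : Differentiable ℂ f)
    {W : ℝ → ℝ≥0∞} (hW : Measurable W) (c : ℂ) :
    ∫⁻ z, ‖f z‖ₑ ^ 2 * W ‖z - c‖ =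
      ∑' n, ‖taylorCoeff f c n‖ₑ ^ 2 * ∫⁻ z, ‖z - c‖ₑ ^ (2 * n) * W ‖z - c‖ := by
  have hfc := hf.continuous
  have ofReal_norm_pow : ∀ (w : ℂ) (n : ℕ), ‖w‖ₑ ^ n = ENNReal.ofReal (‖w‖ ^ n) := fun w n ↦ by
    rw [← ofReal_norm, ENNReal.ofReal_pow (norm_nonneg w)]
  have moment : ∀ n, ∫⁻ z, ‖z - c‖ₑ ^ (2 * n) * W ‖z - c‖ =
      ∫⁻ r in Ioi 0, ENNReal.ofReal (2 * π * r * r ^ (2 * n)) * W r := fun n ↦ by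
    simp only [ofReal_norm_pow]
    rw [lintegral_mul_norm_sub_eq_circleAverage (by fun_prop) (fun z ↦ by positivity) hW]
    exact setLIntegral_congr_fun measurableSet_Ioi fun r (hr : 0 < r) ↦ by
      simp only [circleAverage_norm_sub_pow c hr.le]
  have parseval : ∀ r ∈ Ioi (0 : ℝ),
      ENNReal.ofReal (2 * π * r * circleAverage (fun z ↦ ‖f z‖ ^ 2) c r) * W r =
        ∑' n, ‖taylorCoeff f c n‖ₑ ^ 2 * (ENNReal.ofReal (2 * π * r * r ^ (2 * n)) * W r) := by
    intro r (hr : 0 < r)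
    have sum := hasSum_sq_norm_taylorCoeff (c := c) hf hr
    rw [← sum.tsum_eq, ← tsum_mul_left, ENNReal.ofReal_tsum_of_nonneg (fun n ↦ by positivity)
      (sum.summable.mul_left _), ← ENNReal.tsum_mul_right]
    refine tsum_congr fun n ↦ ?_
    rw [ofReal_norm_pow, mul_left_comm (2 * π * r), ENNReal.ofReal_mul (by positivity), mul_assoc]
  simp only [moment]
  simp only [ofReal_norm_pow (f _)]
  rw [lintegral_mul_norm_sub_eq_circleAverage (by fun_prop) (fun z ↦ by positivity) hW,
    setLIntegral_congr_fun measurableSet_Ioi parseval, lintegral_tsum fun n ↦ by fun_prop]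
  exact tsum_congr fun n ↦ lintegral_const_mul _ (by fun_prop)

/-- The standard complex Gaussian measure on `ℂ`, whose `L²` norm on entire functions is the norm
of the Bargmann–Fock space of one variable. -/
noncomputable def fockMeasure : Measure ℂ :=
  volume.withDensity fun z ↦ ENNReal.ofReal (π⁻¹ * rexp (-‖z‖ ^ 2))

lemma lintegral_fockMeasure {g : ℂ → ℝ≥0∞} (hg : Measurable g) :
    ∫⁻ z, g z ∂fockMeasure = ∫⁻ z, g z * ENNReal.ofReal (π⁻¹ * rexp (-‖z‖ ^ 2)) := by
  rw [fockMeasure, lintegral_withDensity_eq_lintegral_mul _ (by fun_prop) hg]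
  simp only [Pi.mul_apply, mul_comm]

lemma lintegral_enorm_pow_fockMeasure (n : ℕ) : ∫⁻ z, ‖z‖ₑ ^ (2 * n) ∂fockMeasure = n ! := by
  have moment : ∫ z : ℂ, ‖z‖ ^ (2 * n : ℝ) * rexp (-‖z‖ ^ (2 : ℝ)) = π * n ! := by
    rw [Complex.integral_rpow_mul_exp_neg_rpow one_le_two (by linarith [n.cast_nonneg (α := ℝ)]),
      show (2 * n + 2 : ℝ) / 2 = n + 1 by ring, Real.Gamma_nat_eq_factorial]
    ring
  have hint : Integrable fun z : ℂ ↦ ‖z‖ ^ (2 * n : ℝ) * rexp (-‖z‖ ^ (2 : ℝ)) :=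
    .of_integral_ne_zero (by rw [moment]; positivity)
  rw [lintegral_fockMeasure (by fun_prop)]
  calc ∫⁻ z : ℂ, ‖z‖ₑ ^ (2 * n) * ENNReal.ofReal (π⁻¹ * rexp (-‖z‖ ^ 2))
      = ∫⁻ z : ℂ, ENNReal.ofReal (π⁻¹ * (‖z‖ ^ (2 * n : ℝ) * rexp (-‖z‖ ^ (2 : ℝ)))) := by
        congr with z
        rw [← ofReal_norm, ← ENNReal.ofReal_pow (norm_nonneg z),
          ← ENNReal.ofReal_mul (by positivity), mul_left_comm, rpow_two]
        norm_cast
    _ = n ! := by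
        rw [← ofReal_integral_eq_lintegral_ofReal (hint.const_mul _)
          (.of_forall fun z ↦ by positivity), integral_const_mul, moment,
          inv_mul_cancel_left₀ pi_ne_zero, ENNReal.ofReal_natCast]

instance : IsProbabilityMeasure fockMeasure where
  measure_univ := by simpa using lintegral_enorm_pow_fockMeasure 0

theorem lintegral_fockMeasure_eq_tsum {f : ℂ → ℂ} (hf : Differentiable ℂ f)
    {W : ℝ → ℝ≥0∞} (hW : Measurable W) :
    ∫⁻ z, ‖f z‖ₑ ^ 2 * W ‖z‖ ∂fockMeasure =
      ∑' n, ‖taylorCoeff f 0 n‖ₑ ^ 2 * ∫⁻ z, ‖z‖ₑ ^ (2 * n) * W ‖z‖ ∂fockMeasure := by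
  have hfc := hf.continuous
  have parseval := lintegral_sq_enorm_mul_norm_sub_eq_tsum hf
    (W := fun r ↦ W r * ENNReal.ofReal (π⁻¹ * rexp (-r ^ 2))) (by fun_prop) 0
  simp only [sub_zero, ← mul_assoc] at parseval
  rw [lintegral_fockMeasure (by fun_prop), parseval]
  exact tsum_congr fun n ↦ by rw [lintegral_fockMeasure (by fun_prop)]

lemma two_mul_le_sq_mul_inv_add (a b : ℝ≥0∞) : 2 * b ≤ b ^ 2 * a⁻¹ + a := by
  rcases eq_or_ne a 0 with rfl | ha
  · rcases eq_or_ne b 0 with rfl | hb <;> simp [*]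
  induction a with
  | top => simp
  | coe a =>
    induction b with
    | top => simp
    | coe b =>
      have ha : a ≠ 0 := mod_cast ha
      rw [← ENNReal.coe_inv ha]
      norm_cast
      have : 0 < (a : ℝ) := NNReal.coe_pos.2 (pos_iff_ne_zero.2 ha)
      rw [← NNReal.coe_le_coe]
      push_cast
      rw [← sub_nonneg, show (b : ℝ) ^ 2 * (a : ℝ)⁻¹ + a - 2 * b = (b - a) ^ 2 * (a : ℝ)⁻¹ by
        field_simp; ring]
      positivity

lemma factorial_le_lintegral_fockMeasure (n : ℕ) :
    (n ! : ℝ≥0∞) ≤ (n + 2) * ∫⁻ z, ‖z‖ₑ ^ (2 * n) * (1 + ‖z‖ₑ ^ 2)⁻¹ ∂fockMeasure := by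
  set N := ∫⁻ z, ‖z‖ₑ ^ (2 * n) * (1 + ‖z‖ₑ ^ 2)⁻¹ ∂fockMeasure
  -- The tangent line to `1 / t` at `t = n + 2`, evaluated at `t = 1 + |z| ^ 2`.
  have pointwise (z : ℂ) : 2 * (n + 2 : ℝ≥0∞) * ‖z‖ₑ ^ (2 * n) ≤
      (n + 2) ^ 2 * (‖z‖ₑ ^ (2 * n) * (1 + ‖z‖ₑ ^ 2)⁻¹) +
        (‖z‖ₑ ^ (2 * n) + ‖z‖ₑ ^ (2 * (n + 1))) :=
    calc 2 * (n + 2 : ℝ≥0∞) * ‖z‖ₑ ^ (2 * n)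
        ≤ ((n + 2) ^ 2 * (1 + ‖z‖ₑ ^ 2)⁻¹ + (1 + ‖z‖ₑ ^ 2)) * ‖z‖ₑ ^ (2 * n) := by
          gcongr
          exact two_mul_le_sq_mul_inv_add _ _
      _ = _ := by ring
  have integrated : 2 * (n + 2 : ℝ≥0∞) * n ! ≤ (n + 2) ^ 2 * N + (n ! + (n + 1)!) := by
    have := lintegral_mono (μ := fockMeasure) pointwise
    rwa [lintegral_const_mul _ (by fun_prop), lintegral_add_left (by fun_prop),
      lintegral_const_mul _ (by fun_prop), lintegral_add_left (by fun_prop),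
      lintegral_enorm_pow_fockMeasure, lintegral_enorm_pow_fockMeasure] at this
  have cancelled : (n + 2 : ℝ≥0∞) * n ! ≤ (n + 2) * ((n + 2) * N) := by
    have hfin : (n + 2 : ℝ≥0∞) * n ! ≠ ∞ := by finiteness
    refine (ENNReal.add_le_add_iff_right hfin).1 ?_
    rw [Nat.factorial_succ] at integrated
    push_cast at integrated
    convert! integrated using 1 <;> ring
  exact (ENNReal.mul_le_mul_iff_right (by simp) (by finiteness)).1 cancelled

theorem lintegral_sq_enorm_sub_le_deriv {f : ℂ → ℂ} (hf : Differentiable ℂ f) :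
    ∫⁻ z, ‖f z - f 0‖ₑ ^ 2 ∂fockMeasure ≤
      2 * ∫⁻ z, ‖deriv f z‖ₑ ^ 2 * (1 + ‖z‖ₑ ^ 2)⁻¹ ∂fockMeasure := by
  have h₁ := lintegral_fockMeasure_eq_tsum (hf.sub_const (f 0)) (W := 1) measurable_one
  have h₂ := lintegral_fockMeasure_eq_tsum hf.deriv (W := fun r ↦ (1 + ‖r‖ₑ ^ 2)⁻¹) (by fun_prop)
  simp only [Pi.one_apply, mul_one, enorm_norm, lintegral_enorm_pow_fockMeasure] at h₁ h₂
  rw [h₁, h₂, tsum_eq_zero_add' ENNReal.summable, taylorCoeff_zero, sub_self, enorm_zero,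
    zero_pow two_ne_zero, zero_mul, zero_add, ← ENNReal.tsum_mul_left]
  refine ENNReal.tsum_le_tsum fun n ↦ ?_
  set N := ∫⁻ z, ‖z‖ₑ ^ (2 * n) * (1 + ‖z‖ₑ ^ 2)⁻¹ ∂fockMeasure
  have enorm_coeff : ‖taylorCoeff (deriv f) 0 n‖ₑ = (n + 1) * ‖taylorCoeff f 0 (n + 1)‖ₑ := by
    rw [taylorCoeff_deriv, enorm_mul, ← Nat.cast_succ, ← Nat.cast_succ, ← ofReal_norm,
      Complex.norm_natCast, ENNReal.ofReal_natCast]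
  rw [taylorCoeff_sub_const _ n.succ_ne_zero, enorm_coeff]
  calc ‖taylorCoeff f 0 (n + 1)‖ₑ ^ 2 * (n + 1)!
      = ‖taylorCoeff f 0 (n + 1)‖ₑ ^ 2 * ((n + 1) * n !) := by
        rw [Nat.factorial_succ]
        norm_cast
    _ ≤ ‖taylorCoeff f 0 (n + 1)‖ₑ ^ 2 * ((n + 1) * ((2 * (n + 1)) * N)) := by
        gcongr
        refine (factorial_le_lintegral_fockMeasure n).trans ?_
        gcongr
        norm_cast
        lia
    _ = 2 * (((n + 1) * ‖taylorCoeff f 0 (n + 1)‖ₑ) ^ 2 * N) := by ring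

end Gauss

section Schur

/-- The scale at which the Gaussian weight `exp (-‖z‖ ^ 2)` is essentially constant around `w`. -/
noncomputable def gaussRadius (w : ℂ) : ℝ :=
  (√(1 + ‖w‖ ^ 2))⁻¹

variable {z w : ℂ}

lemma gaussRadius_pos (w : ℂ) : 0 < gaussRadius w := by
  unfold gaussRadius
  positivity

lemma sq_gaussRadius (w : ℂ) : gaussRadius w ^ 2 = (1 + ‖w‖ ^ 2)⁻¹ := by
  rw [gaussRadius, inv_pow, sq_sqrt (by positivity)]

@[fun_prop]
lemma continuous_gaussRadius : Continuous gaussRadius := by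
  have (w : ℂ) : √(1 + ‖w‖ ^ 2) ≠ 0 := by positivity
  unfold gaussRadius
  fun_prop (disch := assumption)

lemma gaussRadius_le_one (w : ℂ) : gaussRadius w ≤ 1 :=
  inv_le_one_of_one_le₀ (one_le_sqrt.2 (by linarith [sq_nonneg ‖w‖]))

lemma norm_sq_le_add_two_of_mem_ball (hz : z ∈ ball w (gaussRadius w)) : ‖z‖ ^ 2 ≤ ‖w‖ ^ 2 + 2 := by
  have unit : gaussRadius w ^ 2 + (‖w‖ * gaussRadius w) ^ 2 = 1 := by
    rw [mul_pow, sq_gaussRadius]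
    field_simp
  calc ‖z‖ ^ 2 ≤ (‖w‖ + gaussRadius w) ^ 2 := by
        gcongr
        linarith [norm_le_norm_add_norm_sub' z w, mem_ball_iff_norm.1 hz]
    _ ≤ ‖w‖ ^ 2 + 2 := by nlinarith [sq_nonneg (‖w‖ * gaussRadius w - 1)]

lemma one_add_norm_sq_le_of_dist_le_one (h : dist z w ≤ 1) :
    1 + ‖z‖ ^ 2 ≤ 3 * (1 + ‖w‖ ^ 2) := by
  have : ‖z‖ ^ 2 ≤ (‖w‖ + 1) ^ 2 := by
    gcongr
    linarith [norm_le_norm_add_norm_sub' z w, dist_eq_norm z w]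
  linarith [sq_nonneg (‖w‖ - 1), sq_nonneg ‖w‖]

lemma dist_lt_of_mem_ball_gaussRadius (hz : z ∈ ball w (gaussRadius w)) :
    dist w z < √3 * gaussRadius z := by
  have hle := one_add_norm_sq_le_of_dist_le_one ((mem_ball.1 hz).le.trans (gaussRadius_le_one w))
  calc dist w z < gaussRadius w := mem_ball'.1 hz
    _ ≤ √3 * gaussRadius z := by
      refine le_of_sq_le_sq ?_ (by have := gaussRadius_pos z; positivity)
      rw [mul_pow, sq_sqrt (by norm_num), sq_gaussRadius, sq_gaussRadius, ← div_eq_mul_inv,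
        inv_le_comm₀ (by positivity) (by positivity), inv_div, div_le_iff₀ (by norm_num)]
      linarith

lemma gaussian_weight_le_of_mem_ball (hz : z ∈ ball w (gaussRadius w)) :
    (1 + ‖w‖ ^ 2) * (π⁻¹ * rexp (-‖w‖ ^ 2)) ≤
      3 * (1 + ‖z‖ ^ 2) * (rexp 2 * (π⁻¹ * rexp (-‖z‖ ^ 2))) := by
  have hexp : rexp (-‖w‖ ^ 2) ≤ rexp 2 * rexp (-‖z‖ ^ 2) := by
    rw [← Real.exp_add, Real.exp_le_exp]
    linarith [norm_sq_le_add_two_of_mem_ball hz]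
  rw [mul_left_comm (rexp 2)]
  gcongr
  exact one_add_norm_sq_le_of_dist_le_one
    ((mem_ball'.1 hz).le.trans (gaussRadius_le_one w))

/-- The kernel `(1 + ‖w‖ ^ 2) * exp (-‖w‖ ^ 2) / π` on the pairs `(w, z)` with
`‖z - w‖ < gaussRadius w`, against which `(‖f z‖ - 1) ^ 2` dominates the weighted derivative. -/
noncomputable def gaussKernel (w z : ℂ) : ℝ≥0∞ :=
  (ball w (gaussRadius w)).indicator
    (fun _ ↦ ENNReal.ofReal ((1 + ‖w‖ ^ 2) * (π⁻¹ * rexp (-‖w‖ ^ 2)))) z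

lemma measurable_uncurry_gaussKernel : Measurable (Function.uncurry gaussKernel) := by
  have hopen : IsOpen {p : ℂ × ℂ | dist p.2 p.1 < gaussRadius p.1} :=
    isOpen_lt (by fun_prop) (by fun_prop)
  have hweight : Measurable fun p : ℂ × ℂ ↦
      ENNReal.ofReal ((1 + ‖p.1‖ ^ 2) * (π⁻¹ * rexp (-‖p.1‖ ^ 2))) := by
    fun_prop
  exact hweight.indicator hopen.measurableSet

lemma lintegral_gaussKernel_mul {u : ℂ → ℝ≥0∞} (hu : Measurable u) (w : ℂ) :
    ∫⁻ z, gaussKernel w z * u z = ENNReal.ofReal ((1 + ‖w‖ ^ 2) * (π⁻¹ * rexp (-‖w‖ ^ 2))) *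
      ∫⁻ z in ball w (gaussRadius w), u z := by
  simp only [gaussKernel, ← indicator_mul_left]
  rw [lintegral_indicator measurableSet_ball, lintegral_const_mul _ hu]

lemma lintegral_gaussKernel_le (z : ℂ) :
    ∫⁻ w, gaussKernel w z ≤
      ENNReal.ofReal (9 * π * rexp 2) * ENNReal.ofReal (π⁻¹ * rexp (-‖z‖ ^ 2)) := by
  set M := 3 * (1 + ‖z‖ ^ 2) * (rexp 2 * (π⁻¹ * rexp (-‖z‖ ^ 2))) with hM
  have hρ := gaussRadius_pos z
  calc ∫⁻ w, gaussKernel w z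
      ≤ ∫⁻ w, (ball z (√3 * gaussRadius z)).indicator (fun _ ↦ ENNReal.ofReal M) w := by
        refine lintegral_mono fun w ↦ ?_
        rw [gaussKernel]
        by_cases hz : z ∈ ball w (gaussRadius w)
        · rw [indicator_of_mem hz,
            indicator_of_mem (mem_ball.2 (dist_lt_of_mem_ball_gaussRadius hz))]
          exact ENNReal.ofReal_le_ofReal (gaussian_weight_le_of_mem_ball hz)
        · rw [indicator_of_notMem hz]
          exact zero_le
    _ = ENNReal.ofReal (M * ((√3 * gaussRadius z) ^ 2 * π)) := by
        rw [lintegral_indicator_const measurableSet_ball, Complex.volume_ball,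
          ENNReal.ofReal_mul (p := M) (by positivity),
          ENNReal.ofReal_mul (p := (√3 * gaussRadius z) ^ 2) (by positivity),
          ENNReal.ofReal_pow (by positivity), ← NNReal.coe_real_pi, ENNReal.ofReal_coe_nnreal]
    _ = _ := by
        rw [← ENNReal.ofReal_mul (by positivity), mul_pow, sq_sqrt (by norm_num),
          sq_gaussRadius, hM]
        congr 1
        field_simp
        norm_num

lemma sq_enorm_deriv_mul_le {f : ℂ → ℂ} (hf : Differentiable ℂ f) (w : ℂ) :
    ‖deriv f w‖ₑ ^ 2 * (1 + ‖w‖ₑ ^ 2)⁻¹ ≤ ENNReal.ofReal (1600 * π⁻¹) *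
      (ENNReal.ofReal (1 + ‖w‖ ^ 2) * ∫⁻ z in ball w (gaussRadius w), ‖‖f z‖ - 1‖ₑ ^ 2) := by
  have weight : (1 + ‖w‖ₑ ^ 2)⁻¹ = ENNReal.ofReal (π⁻¹ * (1 + ‖w‖ ^ 2)) *
      ENNReal.ofReal (π * gaussRadius w ^ 4) := by
    rw [← ENNReal.ofReal_mul (by positivity), pow_mul _ 2 2, sq_gaussRadius,
      show π⁻¹ * (1 + ‖w‖ ^ 2) * (π * ((1 + ‖w‖ ^ 2)⁻¹) ^ 2) = (1 + ‖w‖ ^ 2)⁻¹ by field_simp,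
      ENNReal.ofReal_inv_of_pos (by positivity), ENNReal.ofReal_add zero_le_one (by positivity),
      ENNReal.ofReal_one, ENNReal.ofReal_pow (norm_nonneg w), ofReal_norm]
  calc ‖deriv f w‖ₑ ^ 2 * (1 + ‖w‖ₑ ^ 2)⁻¹
      = ENNReal.ofReal (π⁻¹ * (1 + ‖w‖ ^ 2)) *
          (ENNReal.ofReal (π * gaussRadius w ^ 4) * ‖deriv f w‖ₑ ^ 2) := by
        rw [weight]
        ring
    _ ≤ ENNReal.ofReal (π⁻¹ * (1 + ‖w‖ ^ 2)) *
        (1600 * ∫⁻ z in ball w (gaussRadius w), ‖‖f z‖ - 1‖ₑ ^ 2) := by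
        refine mul_le_mul_right ?_ _
        exact pow_four_mul_enorm_deriv_sq_le hf w (gaussRadius_pos w).le
    _ = _ := by
        rw [ENNReal.ofReal_mul (by positivity), ENNReal.ofReal_mul (by norm_num),
          ENNReal.ofReal_ofNat]
        ring

lemma lintegral_lintegral_mul_le {α β : Type*} [MeasurableSpace α] [MeasurableSpace β]
    {μ : Measure α} {ν : Measure β} [SFinite μ] [SFinite ν] {K : α → β → ℝ≥0∞}
    (hK : Measurable (Function.uncurry K)) {u v : β → ℝ≥0∞} (hu : Measurable u) {C : ℝ≥0∞}
    (hKv : ∀ y, ∫⁻ x, K x y ∂μ ≤ C * v y) :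
    ∫⁻ x, ∫⁻ y, K x y * u y ∂ν ∂μ ≤ ∫⁻ y, C * (u y * v y) ∂ν := by
  rw [lintegral_lintegral_swap (hK.mul (hu.comp measurable_snd)).aemeasurable]
  refine lintegral_mono fun y ↦ ?_
  have hKy : Measurable fun x ↦ K x y := hK.comp measurable_prodMk_right
  rw [lintegral_mul_const _ hKy]
  exact (mul_le_mul_left (hKv y) _).trans_eq (by ring)

theorem lintegral_sq_enorm_deriv_mul_le {f : ℂ → ℂ} (hf : Differentiable ℂ f) :
    ∫⁻ w, ‖deriv f w‖ₑ ^ 2 * (1 + ‖w‖ₑ ^ 2)⁻¹ ∂fockMeasure ≤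
      ENNReal.ofReal (14400 * rexp 2) * ∫⁻ z, ‖‖f z‖ - 1‖ₑ ^ 2 ∂fockMeasure := by
  have hfc := hf.continuous
  have pointwise (w : ℂ) : ‖deriv f w‖ₑ ^ 2 * (1 + ‖w‖ₑ ^ 2)⁻¹ *
      ENNReal.ofReal (π⁻¹ * rexp (-‖w‖ ^ 2)) ≤
        ENNReal.ofReal (1600 * π⁻¹) * ∫⁻ z, gaussKernel w z * ‖‖f z‖ - 1‖ₑ ^ 2 := by
    rw [lintegral_gaussKernel_mul (by fun_prop),
      ENNReal.ofReal_mul (p := 1 + ‖w‖ ^ 2) (by positivity)]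
    exact (mul_le_mul_left (sq_enorm_deriv_mul_le hf w) _).trans_eq (by ring)
  calc ∫⁻ w, ‖deriv f w‖ₑ ^ 2 * (1 + ‖w‖ₑ ^ 2)⁻¹ ∂fockMeasure
      ≤ ∫⁻ w, ENNReal.ofReal (1600 * π⁻¹) * ∫⁻ z, gaussKernel w z * ‖‖f z‖ - 1‖ₑ ^ 2 := by
        rw [lintegral_fockMeasure (by fun_prop)]
        exact lintegral_mono pointwise
    _ ≤ ENNReal.ofReal (1600 * π⁻¹) * ∫⁻ z, ENNReal.ofReal (9 * π * rexp 2) *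
          (‖‖f z‖ - 1‖ₑ ^ 2 * ENNReal.ofReal (π⁻¹ * rexp (-‖z‖ ^ 2))) := by
        rw [lintegral_const_mul' _ _ ENNReal.ofReal_ne_top]
        exact mul_le_mul_right (lintegral_lintegral_mul_le measurable_uncurry_gaussKernel
          (by fun_prop) lintegral_gaussKernel_le) _
    _ = ENNReal.ofReal (14400 * rexp 2) * ∫⁻ z, ‖‖f z‖ - 1‖ₑ ^ 2 ∂fockMeasure := by
        rw [lintegral_const_mul _ (by fun_prop), ← lintegral_fockMeasure (by fun_prop), ← mul_assoc,
          ← ENNReal.ofReal_mul (by positivity)]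
        congr 2
        field_simp
        norm_num

theorem lintegral_sq_enorm_sub_le {f : ℂ → ℂ} (hf : Differentiable ℂ f) :
    ∫⁻ z, ‖f z - f 0‖ₑ ^ 2 ∂fockMeasure ≤
      ENNReal.ofReal (28800 * rexp 2) * ∫⁻ z, ‖‖f z‖ - 1‖ₑ ^ 2 ∂fockMeasure := by
  refine (lintegral_sq_enorm_sub_le_deriv hf).trans
    ((mul_le_mul_right (lintegral_sq_enorm_deriv_mul_le hf) 2).trans_eq ?_)
  rw [← mul_assoc, ← ENNReal.ofReal_ofNat, ← ENNReal.ofReal_mul (by norm_num)]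
  ring_nf

end Schur

section Tensorization

lemma eLpNorm_prod_le_of_forall_right {α β E₁ E₂ : Type*} [MeasurableSpace α] [MeasurableSpace β]
    [NormedAddCommGroup E₁] [NormedAddCommGroup E₂] {μ : Measure α} {ν : Measure β} [SFinite μ]
    [SFinite ν] {p C : ℝ≥0∞} (hp₀ : p ≠ 0) (hp : p ≠ ∞) {f : α × β → E₁} {g : α × β → E₂}
    (hf : AEStronglyMeasurable f (μ.prod ν)) (hg : AEStronglyMeasurable g (μ.prod ν))
    (h : ∀ y, eLpNorm (fun x ↦ f (x, y)) p μ ≤ C * eLpNorm (fun x ↦ g (x, y)) p μ) :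
    eLpNorm f p (μ.prod ν) ≤ C * eLpNorm g p (μ.prod ν) := by
  lift p to NNReal using hp
  rw [ne_eq, ENNReal.coe_eq_zero, ← ne_eq] at hp₀
  rw [← ENNReal.rpow_le_rpow_iff (NNReal.coe_pos.2 hp₀.bot_lt),
    ENNReal.mul_rpow_of_nonneg _ _ p.coe_nonneg, eLpNorm_nnreal_pow_eq_lintegral hp₀,
    eLpNorm_nnreal_pow_eq_lintegral hp₀,
    lintegral_prod_symm _ (hf.enorm.pow_const _), lintegral_prod_symm _ (hg.enorm.pow_const _)]
  calc ∫⁻ y, ∫⁻ x, ‖f (x, y)‖ₑ ^ (p : ℝ) ∂μ ∂ν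
      ≤ ∫⁻ y, C ^ (p : ℝ) * ∫⁻ x, ‖g (x, y)‖ₑ ^ (p : ℝ) ∂μ ∂ν := by
        refine lintegral_mono fun y ↦ ?_
        rw [← eLpNorm_nnreal_pow_eq_lintegral (f := fun x ↦ f (x, y)) hp₀,
          ← eLpNorm_nnreal_pow_eq_lintegral (f := fun x ↦ g (x, y)) hp₀,
          ← ENNReal.mul_rpow_of_nonneg _ _ p.coe_nonneg]
        exact ENNReal.rpow_le_rpow (h y) p.coe_nonneg
    _ = C ^ (p : ℝ) * ∫⁻ y, ∫⁻ x, ‖g (x, y)‖ₑ ^ (p : ℝ) ∂μ ∂ν :=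
        lintegral_const_mul'' _ (hg.enorm.pow_const _).lintegral_prod_left'

lemma eLpNorm_comp_snd {α β E : Type*} [MeasurableSpace α] [MeasurableSpace β]
    [NormedAddCommGroup E] {μ : Measure α} {ν : Measure β} [IsProbabilityMeasure μ] [SFinite ν]
    {p : ℝ≥0∞} {g : β → E} (hg : AEStronglyMeasurable g ν) :
    eLpNorm (fun z : α × β ↦ g z.2) p (μ.prod ν) = eLpNorm g p ν :=
  eLpNorm_comp_measurePreserving hg measurePreserving_snd

lemma eLpNorm_sub_le_sub_add_sub {α E : Type*} [MeasurableSpace α] [NormedAddCommGroup E]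
    {μ : Measure α} {p : ℝ≥0∞} (hp : 1 ≤ p) {f g h : α → E} (hf : AEStronglyMeasurable f μ)
    (hg : AEStronglyMeasurable g μ) (hh : AEStronglyMeasurable h μ) :
    eLpNorm (fun x ↦ f x - h x) p μ ≤
      eLpNorm (fun x ↦ f x - g x) p μ + eLpNorm (fun x ↦ g x - h x) p μ := by
  have triangle := eLpNorm_add_le (hf.sub hg) (hg.sub hh) hp
  rwa [sub_add_sub_cancel] at triangle

lemma eLpNorm_norm_sub_const_le {α E : Type*} [MeasurableSpace α] [NormedAddCommGroup E]
    {μ : Measure α} {p : ℝ≥0∞} (hp : 1 ≤ p) {f g : α → E} (hf : AEStronglyMeasurable f μ)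
    (hg : AEStronglyMeasurable g μ) (c : ℝ) :
    eLpNorm (fun x ↦ ‖f x‖ - c) p μ ≤
      eLpNorm (fun x ↦ g x - f x) p μ + eLpNorm (fun x ↦ ‖g x‖ - c) p μ := by
  rw [← eLpNorm_norm fun x ↦ g x - f x, ← eLpNorm_norm fun x ↦ ‖g x‖ - c]
  refine (eLpNorm_mono_real fun x ↦ ?_).trans (eLpNorm_add_le (hg.sub hf).norm
    (hg.norm.sub aestronglyMeasurable_const).norm hp)
  calc |‖f x‖ - c| = |(‖f x‖ - ‖g x‖) + (‖g x‖ - c)| := by ring_nf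
    _ ≤ |‖f x‖ - ‖g x‖| + |‖g x‖ - c| := abs_add_le _ _
    _ ≤ ‖g x - f x‖ + |‖g x‖ - c| := by
      gcongr
      exact norm_sub_rev (g x) (f x) ▸ abs_norm_sub_norm_le _ _

variable {E E₁ E₂ : Type*} [NormedAddCommGroup E] [NormedSpace ℂ E] [MeasurableSpace E]
  [NormedAddCommGroup E₁] [NormedSpace ℂ E₁] [MeasurableSpace E₁] [BorelSpace E₁]
  [NormedAddCommGroup E₂] [NormedSpace ℂ E₂] [MeasurableSpace E₂] [BorelSpace E₂]
  {p C C₁ C₂ : ℝ≥0∞}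

/-- Stable phase retrieval at the constant function `1` in `L^p(μ)`, with constant `C`: an entire
function is as close to its value at the base point `x₀` as its modulus is to `1`. The unimodular
constant is left out, because the pointed form is the one that passes to product measures; see
`IsPhaseStableAt.exists_eLpNorm_sub_le`. -/
def IsPhaseStableAt (p : ℝ≥0∞) (μ : Measure E) (x₀ : E) (C : ℝ≥0∞) : Prop :=
  ∀ F : E → ℂ, Differentiable ℂ F →
    eLpNorm (fun x ↦ F x - F x₀) p μ ≤ C * eLpNorm (fun x ↦ ‖F x‖ - 1) p μ

namespace IsPhaseStableAt

lemma of_subsingleton [Subsingleton E] (p : ℝ≥0∞) (μ : Measure E) (x₀ : E) (C : ℝ≥0∞) :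
    IsPhaseStableAt p μ x₀ C := fun F _ ↦ by
  simp [Subsingleton.elim _ x₀]

theorem map_continuousLinearEquiv [BorelSpace E] {μ : Measure E} {ν : Measure E₁} {x₀ : E}
    (hμ : IsPhaseStableAt p μ x₀ C) (e : E ≃L[ℂ] E₁) (he : MeasurePreserving e μ ν) :
    IsPhaseStableAt p ν (e x₀) C := fun F hF ↦ by
  have hFc := hF.continuous
  have h := hμ (F ∘ e) (hF.comp e.differentiable)
  rwa [← eLpNorm_comp_measurePreserving (by fun_prop) he,
    ← eLpNorm_comp_measurePreserving (by fun_prop) he]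

theorem prod [SecondCountableTopologyEither E₁ E₂] {μ : Measure E₁} {ν : Measure E₂}
    [IsProbabilityMeasure μ] [SFinite ν] {x₀ : E₁} {y₀ : E₂} (hp₁ : 1 ≤ p) (hp : p ≠ ∞)
    (hμ : IsPhaseStableAt p μ x₀ C₁) (hν : IsPhaseStableAt p ν y₀ C₂) :
    IsPhaseStableAt p (μ.prod ν) (x₀, y₀) (C₁ + C₂ * (C₁ + 1)) := fun F hF ↦ by
  have hFc := hF.continuous
  have slice : Continuous fun z : E₁ × E₂ ↦ F (x₀, z.2) := by fun_prop
  have first : eLpNorm (fun z ↦ F z - F (x₀, z.2)) p (μ.prod ν) ≤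
      C₁ * eLpNorm (fun z ↦ ‖F z‖ - 1) p (μ.prod ν) :=
    eLpNorm_prod_le_of_forall_right (zero_lt_one.trans_le hp₁).ne' hp
      (by fun_prop) (by fun_prop) fun y ↦
        hμ (fun x ↦ F (x, y)) (hF.comp (by fun_prop))
  have second : eLpNorm (fun z : E₁ × E₂ ↦ F (x₀, z.2) - F (x₀, y₀)) p (μ.prod ν) ≤
      C₂ * eLpNorm (fun z : E₁ × E₂ ↦ ‖F (x₀, z.2)‖ - 1) p (μ.prod ν) := by
    have difference : Continuous fun y ↦ F (x₀, y) - F (x₀, y₀) := by fun_prop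
    have modulus : Continuous fun y ↦ ‖F (x₀, y)‖ - 1 := by fun_prop
    rw [eLpNorm_comp_snd difference.aestronglyMeasurable,
      eLpNorm_comp_snd modulus.aestronglyMeasurable]
    exact hν (fun y ↦ F (x₀, y)) (hF.comp (by fun_prop))
  have modulus : eLpNorm (fun z : E₁ × E₂ ↦ ‖F (x₀, z.2)‖ - 1) p (μ.prod ν) ≤
      (C₁ + 1) * eLpNorm (fun z ↦ ‖F z‖ - 1) p (μ.prod ν) := by
    rw [add_mul, one_mul]
    exact (eLpNorm_norm_sub_const_le hp₁ slice.aestronglyMeasurable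
      hFc.aestronglyMeasurable 1).trans (add_le_add_left first _)
  calc eLpNorm (fun z ↦ F z - F (x₀, y₀)) p (μ.prod ν)
      ≤ eLpNorm (fun z ↦ F z - F (x₀, z.2)) p (μ.prod ν) +
          eLpNorm (fun z ↦ F (x₀, z.2) - F (x₀, y₀)) p (μ.prod ν) :=
        eLpNorm_sub_le_sub_add_sub hp₁ hFc.aestronglyMeasurable slice.aestronglyMeasurable
          aestronglyMeasurable_const
    _ ≤ C₁ * eLpNorm (fun z ↦ ‖F z‖ - 1) p (μ.prod ν) +
          C₂ * ((C₁ + 1) * eLpNorm (fun z ↦ ‖F z‖ - 1) p (μ.prod ν)) :=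
        by grw [first, second, modulus]
    _ = (C₁ + C₂ * (C₁ + 1)) * eLpNorm (fun z ↦ ‖F z‖ - 1) p (μ.prod ν) := by ring

theorem pi [BorelSpace E] [SecondCountableTopology E] {μ : Measure E} [IsProbabilityMeasure μ]
    {x₀ : E} (hp₁ : 1 ≤ p) (hp : p ≠ ∞) (hμ : IsPhaseStableAt p μ x₀ C) (d : ℕ) :
    IsPhaseStableAt p (Measure.pi fun _ : Fin d ↦ μ) (fun _ ↦ x₀)
      (C * ∑ k ∈ Finset.range d, (C + 1) ^ k) := by
  induction d with
  | zero => exact of_subsingleton _ _ _ _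
  | succ d ih =>
    have cons_preserving : MeasurePreserving (Fin.consEquivL ℂ fun _ : Fin (d + 1) ↦ E)
        (μ.prod (Measure.pi fun _ ↦ μ)) (Measure.pi fun _ ↦ μ) := by
      convert (measurePreserving_piFinSuccAbove (fun _ : Fin (d + 1) ↦ μ) 0).symm using 1
      ext z i
      exact Fin.cases rfl (fun _ ↦ rfl) i
    convert (hμ.prod hp₁ hp ih).map_continuousLinearEquiv _ cons_preserving using 1
    · ext i
      exact Fin.cases rfl (fun _ ↦ rfl) i
    · rw [geom_sum_succ]
      ring

theorem exists_eLpNorm_sub_le [BorelSpace E] {μ : Measure E} {x₀ : E}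
    (hp : 1 ≤ p) (hμ : IsPhaseStableAt p μ x₀ C) {F : E → ℂ} (hF : Differentiable ℂ F) :
    ∃ θ ∈ sphere (0 : ℂ) 1,
      eLpNorm (fun x ↦ F x - θ) p μ ≤ (2 * C + 1) * eLpNorm (fun x ↦ ‖F x‖ - 1) p μ := by
  have hFc := hF.continuous
  have norm_sub_phase : ‖F x₀ - exp (arg (F x₀) * I)‖ = ‖‖F x₀‖ - 1‖ := by
    nth_rw 1 [← norm_mul_exp_arg_mul_I (F x₀)]
    rw [← sub_one_mul, norm_mul, norm_exp_ofReal_mul_I, mul_one, ← ofReal_one, ← ofReal_sub,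
      norm_real]
  refine ⟨exp (arg (F x₀) * I), by simp [norm_exp_ofReal_mul_I], ?_⟩
  calc eLpNorm (fun x ↦ F x - exp (arg (F x₀) * I)) p μ
      ≤ eLpNorm (fun x ↦ F x - F x₀) p μ + eLpNorm (fun _ ↦ F x₀ - exp (arg (F x₀) * I)) p μ :=
        eLpNorm_sub_le_sub_add_sub hp (by fun_prop) (by fun_prop) (by fun_prop)
    _ = eLpNorm (fun x ↦ F x - F x₀) p μ + eLpNorm (fun _ ↦ ‖F x₀‖ - 1) p μ := by
        rw [eLpNorm_congr_norm_ae (.of_forall fun _ ↦ norm_sub_phase)]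
    _ ≤ eLpNorm (fun x ↦ F x - F x₀) p μ +
          (eLpNorm (fun x ↦ F x - F x₀) p μ + eLpNorm (fun x ↦ ‖F x‖ - 1) p μ) := by
        gcongr
        exact eLpNorm_norm_sub_const_le hp (by fun_prop) (by fun_prop) 1
    _ ≤ C * eLpNorm (fun x ↦ ‖F x‖ - 1) p μ +
          (C * eLpNorm (fun x ↦ ‖F x‖ - 1) p μ + eLpNorm (fun x ↦ ‖F x‖ - 1) p μ) := by
        gcongr <;> exact hμ F hF
    _ = (2 * C + 1) * eLpNorm (fun x ↦ ‖F x‖ - 1) p μ := by ring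

end IsPhaseStableAt

lemma sq_eLpNorm_two {α E : Type*} [MeasurableSpace α] [NormedAddCommGroup E] (f : α → E)
    (μ : Measure α) : eLpNorm f 2 μ ^ 2 = ∫⁻ x, ‖f x‖ₑ ^ 2 ∂μ := by
  simpa using eLpNorm_nnreal_pow_eq_lintegral (f := f) (μ := μ) (two_ne_zero (α := NNReal))

theorem isPhaseStableAt_fockMeasure :
    IsPhaseStableAt 2 fockMeasure 0 (ENNReal.ofReal √(28800 * rexp 2)) := fun F hF ↦ by
  rw [← ENNReal.pow_le_pow_left_iff two_ne_zero, mul_pow, ← ENNReal.ofReal_pow (sqrt_nonneg _),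
    sq_sqrt (by positivity), sq_eLpNorm_two, sq_eLpNorm_two]
  exact lintegral_sq_enorm_sub_le hF

end Tensorization

section FockNorm

theorem exists_isPhaseStableAt_pi_fockMeasure (d : ℕ) : ∃ C ≠ ∞,
    IsPhaseStableAt 2 (Measure.pi fun _ : Fin d ↦ fockMeasure) (fun _ ↦ 0) C :=
  ⟨_, ENNReal.mul_ne_top ENNReal.ofReal_ne_top (ENNReal.sum_ne_top.2 fun _ _ ↦ by finiteness),
    isPhaseStableAt_fockMeasure.pi one_le_two (by simp) d⟩

theorem pi_withDensity {n : ℕ} {α : Fin n → Type*} [∀ i, MeasurableSpace (α i)]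
    {μ : ∀ i, Measure (α i)} {f : ∀ i, α i → ℝ≥0∞} [∀ i, SigmaFinite (μ i)]
    [∀ i, SigmaFinite ((μ i).withDensity (f i))] (hf : ∀ i, Measurable (f i)) :
    Measure.pi (fun i ↦ (μ i).withDensity (f i)) =
      (Measure.pi μ).withDensity fun x ↦ ∏ i, f i (x i) := by
  induction n with
  | zero =>
    rw [Measure.pi_of_empty, Measure.pi_of_empty]
    simp
  | succ n ih =>
    have key := measurePreserving_piFinSuccAbove μ 0
    rw [← (measurePreserving_piFinSuccAbove (fun i ↦ (μ i).withDensity (f i)) 0).symm.map_eq,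
      ih fun j ↦ hf _, prod_withDensity (hf 0) (by fun_prop)]
    ext s hs
    rw [MeasurableEquiv.map_apply, withDensity_apply _ hs, withDensity_apply _ (by measurability),
      ← key.symm.setLIntegral_comp_preimage hs (by fun_prop)]
    simp only [Fin.prod_univ_succ]
    rfl

variable {d : ℕ} {G : Type*} [NormedAddCommGroup G] {F : (Fin d → ℂ) → G}

lemma pi_fockMeasure (d : ℕ) : Measure.pi (fun _ : Fin d ↦ fockMeasure) =
    volume.withDensity fun z ↦ ENNReal.ofReal (1 / π ^ d * rexp (-∑ q, ‖z q‖ ^ 2)) := by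
  have : SigmaFinite (volume.withDensity fun z : ℂ ↦ ENNReal.ofReal (π⁻¹ * rexp (-‖z‖ ^ 2))) :=
    inferInstanceAs (SigmaFinite fockMeasure)
  unfold fockMeasure
  rw [pi_withDensity fun _ ↦ by fun_prop, ← volume_pi]
  congr with z
  rw [← ENNReal.ofReal_prod_of_nonneg fun _ _ ↦ by positivity, Finset.prod_mul_distrib,
    ← Real.exp_sum]
  simp

lemma lintegral_sq_enorm_pi_fockMeasure (hF : AEStronglyMeasurable F) :
    ∫⁻ z, ‖F z‖ₑ ^ 2 ∂Measure.pi (fun _ : Fin d ↦ fockMeasure) =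
      ∫⁻ z, ENNReal.ofReal (1 / π ^ d * (‖F z‖ ^ 2 * rexp (-∑ q, ‖z q‖ ^ 2))) := by
  rw [pi_fockMeasure,
    lintegral_withDensity_eq_lintegral_mul₀ (Measurable.aemeasurable (by fun_prop))
      (hF.enorm.pow_const 2)]
  congr with z
  rw [Pi.mul_apply, ← ofReal_norm, ← ENNReal.ofReal_pow (norm_nonneg _),
    ← ENNReal.ofReal_mul (by positivity), mul_right_comm, mul_assoc]

lemma gammaNormD_eq_toReal_eLpNorm (hF : AEStronglyMeasurable F) :
    gammaNormD d F = (eLpNorm F 2 (Measure.pi fun _ : Fin d ↦ fockMeasure)).toReal := by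
  have weight : Continuous fun z : Fin d → ℂ ↦ rexp (-∑ q, ‖z q‖ ^ 2) := by fun_prop
  rw [← sqrt_sq ENNReal.toReal_nonneg, ← ENNReal.toReal_pow, sq_eLpNorm_two,
    lintegral_sq_enorm_pi_fockMeasure hF, gammaNormD, ← integral_const_mul]
  exact congrArg _ (integral_eq_lintegral_of_nonneg_ae (.of_forall fun z ↦ by positivity)
    (((hF.norm.pow 2).mul weight.aestronglyMeasurable).const_mul _))

lemma eLpNorm_norm_sub_one_pi_fockMeasure_ne_top (hF : AEStronglyMeasurable F)
    (hint : Integrable fun z ↦ ‖F z‖ ^ 2 * rexp (-∑ q, ‖z q‖ ^ 2)) :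
    eLpNorm (fun z ↦ ‖F z‖ - 1) 2 (Measure.pi fun _ : Fin d ↦ fockMeasure) ≠ ∞ := by
  have ac : Measure.pi (fun _ : Fin d ↦ fockMeasure) ≪ volume :=
    pi_fockMeasure d ▸ withDensity_absolutelyContinuous _ _
  have memLp : MemLp F 2 (Measure.pi fun _ : Fin d ↦ fockMeasure) := by
    refine ⟨hF.mono_ac ac, (ENNReal.pow_lt_top_iff.1 ?_).resolve_right two_ne_zero⟩
    rw [sq_eLpNorm_two, lintegral_sq_enorm_pi_fockMeasure hF]
    exact (hint.const_mul _).lintegral_lt_top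
  exact (memLp.norm.sub (memLp_const 1)).eLpNorm_ne_top

end FockNorm

end FockSpace

/-- **Local stable phase retrieval at 1 in the Bargmann–Fock space over `ℂ^d`.**
For each `d ≥ 1` there exists `M = M_d > 0` such that every entire `F` with finite
Fock norm satisfies `inf_{|λ|=1} ‖F − λ·1‖_{F_d} ≤ M ‖|F| − 1‖_{F_d}`. -/
theorem stmt14 (d : ℕ) (hd : 1 ≤ d) :
    ∃ M : ℝ, 0 < M ∧
      ∀ F : (Fin d → ℂ) → ℂ, Differentiable ℂ F →
        Integrable (fun z : Fin d → ℂ => ‖F z‖ ^ 2 * Real.exp (-∑ q, ‖z q‖ ^ 2)) →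
        (⨅ θ : Metric.sphere (0 : ℂ) 1, gammaNormD d (fun z => F z - θ.1))
          ≤ M * gammaNormD d (fun z => ‖F z‖ - 1) := by
  obtain ⟨C, hC, stable⟩ := FockSpace.exists_isPhaseStableAt_pi_fockMeasure d
  refine ⟨(2 * C + 1).toReal, ENNReal.toReal_pos (by simp) (by finiteness), fun F hF hint ↦ ?_⟩
  have hFc := hF.continuous
  obtain ⟨θ, hθ, hle⟩ := stable.exists_eLpNorm_sub_le one_le_two hF
  have finite := FockSpace.eLpNorm_norm_sub_one_pi_fockMeasure_ne_top hFc.aestronglyMeasurable hint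
  have bounded : BddBelow (Set.range fun θ : Metric.sphere (0 : ℂ) 1 ↦
      gammaNormD d (fun z ↦ F z - θ.1)) :=
    ⟨0, Set.forall_mem_range.2 fun _ ↦ Real.sqrt_nonneg _⟩
  refine (ciInf_le bounded ⟨θ, hθ⟩).trans ?_
  rw [FockSpace.gammaNormD_eq_toReal_eLpNorm (by fun_prop),
    FockSpace.gammaNormD_eq_toReal_eLpNorm (by fun_prop), ← ENNReal.toReal_mul]
  exact ENNReal.toReal_mono (by finiteness) hle
end
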